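/- arXiv:2410.01549 — 3 statements merged into one kernel-verified Lean document; each statement's English description precedes it below -/
import Mathlib

section
/- Let k ≥ 5 be odd and let m ≥ 7 be odd. Set c = m−3 and d = m−5 if m ≡ 1 (mod 4), and c = m−2 and d = m−3 if m ≡ 3 (mod 4). Suppose there exists an edge 2-coloring of the complete graph on n vertices with no monochromatic copy of the kipas K̂_m. Then there exists a Gallai k-coloring of the complete graph on 2n + 10c(5^((k−3)/2) − 1) − 2d(k−3) vertices with no monochromatic copy of K̂_m. Consequently GR_k(K̂_m) ≥ 2(R_2(K̂_m) + 5c(5^((k−3)/2) − 1) − d(k−3)) − 1. -/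
open SimpleGraph

/-- A monochromatic copy of `H` in the graph `G` edge-colored by `c`:
an injective map sending edges of `H` to edges of `G`, all image edges of one color. -/
def IsMonoCopy {α V : Type*} {k : ℕ} (G : SimpleGraph V) (c : V → V → Fin k)
    (H : SimpleGraph α) : Prop :=
  ∃ (f : α → V) (i : Fin k), Function.Injective f ∧
    ∀ a b, H.Adj a b → G.Adj (f a) (f b) ∧ c (f a) (f b) = i

/-- The edge coloring `c` of `G` has no rainbow triangle. -/
def NoRainbowTriangle {V : Type*} {k : ℕ} (G : SimpleGraph V) (c : V → V → Fin k) : Prop :=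
  ¬ ∃ x y z : V, G.Adj x y ∧ G.Adj y z ∧ G.Adj x z ∧
    c x y ≠ c y z ∧ c y z ≠ c x z ∧ c x y ≠ c x z

/-- The Gallai–Ramsey number `GR_k(H)`: the least `N` such that every
rainbow-triangle-free `k`-edge-coloring of the complete graph on `N` vertices
contains a monochromatic copy of `H`. -/
noncomputable def GallaiRamsey (k : ℕ) {α : Type*} (H : SimpleGraph α) : ℕ :=
  sInf {N | ∀ c : Fin N → Fin N → Fin k, (∀ x y, c x y = c y x) →
    NoRainbowTriangle (⊤ : SimpleGraph (Fin N)) c →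
    IsMonoCopy (⊤ : SimpleGraph (Fin N)) c H}

/-- The diagonal two-color Ramsey number `R(H, H)`. -/
noncomputable def Ramsey2 {α : Type*} (H : SimpleGraph α) : ℕ :=
  sInf {N | ∀ c : Fin N → Fin N → Fin 2, (∀ x y, c x y = c y x) →
    IsMonoCopy (⊤ : SimpleGraph (Fin N)) c H}

/-- The fan `F_3 = K_1 + 3K_2`: vertex `0` is the center, joined to all other
vertices, together with the three disjoint edges `12`, `34`, `56`. -/
def fanF3 : SimpleGraph (Fin 7) :=
  SimpleGraph.fromRel (fun a b => a = 0 ∨ (a.val % 2 = 1 ∧ b.val = a.val + 1))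

/-- The kipas `K̂_m = K_1 + P_m`: vertex `0` is the center, joined to all other
vertices, and `1, 2, …, m` form a path. -/
def kipasG (m : ℕ) : SimpleGraph (Fin (m + 1)) :=
  SimpleGraph.fromRel (fun a b => a = 0 ∨ (1 ≤ a.val ∧ b.val = a.val + 1))

/-- The wheel `W_m = K_1 + C_m`: vertex `0` is the center, joined to all other
vertices, and `1, 2, …, m` form a cycle. -/
def wheelG (m : ℕ) : SimpleGraph (Fin (m + 1)) :=
  SimpleGraph.fromRel (fun a b =>
    a = 0 ∨ (1 ≤ a.val ∧ b.val = a.val + 1) ∨ (a.val = m ∧ b.val = 1))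

/-- The star `K_{1,n}`: vertex `0` is the center, joined to all other vertices. -/
def starG (n : ℕ) : SimpleGraph (Fin (n + 1)) :=
  SimpleGraph.fromRel (fun a _ => a = 0)

/-- `K⁺_{1,n}`, the star `K_{1,n}` with one edge subdivided: vertex `0` is joined to
`1, …, n`, and the extra vertex `n+1` is joined to `n`. -/
def starPlusG (n : ℕ) : SimpleGraph (Fin (n + 2)) :=
  SimpleGraph.fromRel (fun a b => (a = 0 ∧ b.val ≤ n) ∨ (a.val = n ∧ b.val = n + 1))

/-- The complete graph on `Fin N` with the single edge `{0, 1}` deleted. -/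
def compMinusEdge (N : ℕ) : SimpleGraph (Fin N) where
  Adj x y := x ≠ y ∧ ¬(x.val = 0 ∧ y.val = 1) ∧ ¬(x.val = 1 ∧ y.val = 0)
  symm := by
    constructor
    intro x y h
    exact ⟨h.1.symm, fun hc => h.2.2 ⟨hc.2, hc.1⟩, fun hc => h.2.1 ⟨hc.2, hc.1⟩⟩
  loopless := by constructor; intro x h; exact h.1 rfl

/-- The complete graph on `Fin M` together with one extra vertex (`none`)
joined exactly to the vertices of `A`. -/
def addVertex (M : ℕ) (A : Set (Fin M)) : SimpleGraph (Option (Fin M)) where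
  Adj x y := (∃ a b : Fin M, x = some a ∧ y = some b ∧ a ≠ b) ∨
    (∃ a ∈ A, (x = some a ∧ y = none) ∨ (x = none ∧ y = some a))
  symm := by
    constructor
    rintro x y (⟨a, b, hx, hy, hab⟩ | ⟨a, ha, (⟨hx, hy⟩ | ⟨hx, hy⟩)⟩)
    · exact Or.inl ⟨b, a, hy, hx, hab.symm⟩
    · exact Or.inr ⟨a, ha, Or.inr ⟨hy, hx⟩⟩
    · exact Or.inr ⟨a, ha, Or.inl ⟨hy, hx⟩⟩
  loopless := by
    constructor
    rintro x (⟨a, b, hx, hy, hab⟩ | ⟨a, ha, (⟨hx, hy⟩ | ⟨hx, hy⟩)⟩) <;> simp_all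

/-- The star-critical Gallai–Ramsey number `GR*_k(H)`: the least `s` such that
every rainbow-triangle-free `k`-edge-coloring of the complete graph on
`GR_k(H) - 1` vertices plus one extra vertex joined to exactly `s` of them
contains a monochromatic copy of `H`. -/
noncomputable def GRstar (k : ℕ) {α : Type*} (H : SimpleGraph α) : ℕ :=
  sInf {s | ∀ A : Finset (Fin (GallaiRamsey k H - 1)), A.card = s →
    ∀ c : Option (Fin (GallaiRamsey k H - 1)) → Option (Fin (GallaiRamsey k H - 1)) → Fin k,
      (∀ x y, c x y = c y x) →
      NoRainbowTriangle (addVertex (GallaiRamsey k H - 1) (↑A)) c →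
      IsMonoCopy (addVertex (GallaiRamsey k H - 1) (↑A)) c H}

/-- `H` is Gallai-Ramsey-full for `k` colors: the complete graph on `GR_k(H)`
vertices minus one edge admits a rainbow-triangle-free `k`-edge-coloring with
no monochromatic copy of `H`. -/
def GallaiRamseyFull (k : ℕ) {α : Type*} (H : SimpleGraph α) : Prop :=
  ∃ c : Fin (GallaiRamsey k H) → Fin (GallaiRamsey k H) → Fin k,
    (∀ x y, c x y = c y x) ∧
    NoRainbowTriangle (compMinusEdge (GallaiRamsey k H)) c ∧
    ¬ IsMonoCopy (compMinusEdge (GallaiRamsey k H)) c H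

/-- Reachability inside the vertex set `s`: there is a walk all of whose
vertices lie in `s`. -/
def ReachableWithin {V : Type*} (R : SimpleGraph V) (s : Set V) (u v : V) : Prop :=
  ∃ w : R.Walk u v, ∀ x ∈ w.support, x ∈ s

/-!
Call a color sparse if its class contains neither a path on `2h + 1` vertices nor a vertex of
degree `h`. If the parts of a blow-up of a triangle-free graph are joined by a color that is sparse
inside every part and absent from one of any two adjacent parts, then this color contains no kipas
`K̂_{2h+1}`: the rim of a kipas centered in a part without the color lies inside one neighboring
part, which contains no such path, while the rim of any other kipas has at least `h` vertices in
the part of its center.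

Substituting into the 2-coloring of `K₅` by two 5-cycles, whose classes are triangle-free, uses up
two new colors. Each of them may be sparse inside the two parts that are not adjacent in its cycle.
Starting from a `2r`-regular graph on `h + 2r` vertices and its complement, both sparse when
`2r < h`, five-fold substitution gives colorings with two sparse colors on `(h + 2r) 5^s` vertices;
these and a monochromatic `K_h` give colorings with one sparse color, and the latter together
with the given 2-coloring give the Gallai coloring. The last color joins two copies of it.
-/

open Finset

section ColorClass

variable {V : Type*} {κ : Type*}

/-- The graph formed by the edges of color `i` under `χ`. A symmetric coloring of the edges of a
complete graph is encoded as a function on `Sym2 V`, whose values on the diagonal are ignored. -/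
def colorClass (χ : Sym2 V → κ) (i : κ) : SimpleGraph V :=
  SimpleGraph.fromEdgeSet (χ ⁻¹' {i})

@[simp]
lemma colorClass_adj {χ : Sym2 V → κ} {i : κ} {x y : V} :
    (colorClass χ i).Adj x y ↔ χ s(x, y) = i ∧ x ≠ y := by
  simp [colorClass]

lemma colorClass_const (i : κ) : colorClass (fun _ : Sym2 V ↦ i) i = ⊤ := by
  ext; simp

lemma colorClass_eq_bot {χ : Sym2 V → κ} {i : κ} (h : ∀ e, χ e ≠ i) : colorClass χ i = ⊥ := by
  ext; simp [h]

lemma colorClass_comp {κ' : Type*} {f : κ → κ'} (hf : Function.Injective f) (χ : Sym2 V → κ)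
    (i : κ) : colorClass (f ∘ χ) (f i) = colorClass χ i := by
  ext; simp [hf.eq_iff]

lemma colorClass_comp_map {W : Type*} {f : W → V} (hf : Function.Injective f) (χ : Sym2 V → κ)
    (i : κ) : colorClass (χ ∘ Sym2.map f) i = (colorClass χ i).comap f := by
  ext; simp [hf.eq_iff]

open Classical in
/-- The coloring that gives the edges of `G` color `p` and the edges of `Gᶜ` color `q`. -/
noncomputable def twoColoring (G : SimpleGraph V) (p q : κ) (e : Sym2 V) : κ :=
  if e ∈ G.edgeSet then p else q

lemma twoColoring_eq_or (G : SimpleGraph V) (p q : κ) (e : Sym2 V) :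
    twoColoring G p q e = p ∨ twoColoring G p q e = q := by
  unfold twoColoring; split_ifs <;> simp

lemma colorClass_twoColoring_left (G : SimpleGraph V) {p q : κ} (hpq : p ≠ q) :
    colorClass (twoColoring G p q) p = G := by
  ext x y
  simpa [twoColoring, hpq.symm] using fun h : G.Adj x y ↦ h.ne

lemma colorClass_twoColoring_right (G : SimpleGraph V) {p q : κ} (hpq : p ≠ q) :
    colorClass (twoColoring G p q) q = Gᶜ := by
  ext x y
  simp [twoColoring, hpq, and_comm]

lemma colorClass_twoColoring_of_ne (G : SimpleGraph V) {p q i : κ} (hp : i ≠ p) (hq : i ≠ q) :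
    colorClass (twoColoring G p q) i = ⊥ :=
  colorClass_eq_bot fun e ↦ by rcases twoColoring_eq_or G p q e with h | h <;> simp [*, Ne.symm]

end ColorClass

section Gallai

variable {V : Type*} {k : ℕ}

/-- `χ` is a Gallai coloring of the complete graph on `V`. -/
def IsGallai (χ : Sym2 V → Fin k) : Prop :=
  NoRainbowTriangle (⊤ : SimpleGraph V) fun x y ↦ χ s(x, y)

lemma IsGallai.eq_or_eq_or_eq {χ : Sym2 V → Fin k} (hχ : IsGallai χ) {x y z : V} (hxy : x ≠ y)
    (hyz : y ≠ z) (hxz : x ≠ z) :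
    χ s(x, y) = χ s(y, z) ∨ χ s(y, z) = χ s(x, z) ∨ χ s(x, y) = χ s(x, z) := by
  by_contra! h
  exact hχ ⟨x, y, z, hxy, hyz, hxz, h⟩

lemma isGallai_of_forall_eq_or {χ : Sym2 V → Fin k} {p q : Fin k}
    (h : ∀ e, χ e = p ∨ χ e = q) : IsGallai χ := by
  rintro ⟨x, y, z, -, -, -, hne⟩
  grind [h s(x, y), h s(y, z), h s(x, z)]

lemma IsGallai.comp {l : ℕ} {χ : Sym2 V → Fin k} (hχ : IsGallai χ) (f : Fin k → Fin l) :
    IsGallai (f ∘ χ) := by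
  rintro ⟨x, y, z, hxy, hyz, hxz, h₁, h₂, h₃⟩
  exact hχ ⟨x, y, z, hxy, hyz, hxz, ne_of_apply_ne f h₁, ne_of_apply_ne f h₂, ne_of_apply_ne f h₃⟩

lemma IsGallai.comp_map {W : Type*} {χ : Sym2 V → Fin k} (hχ : IsGallai χ) {f : W → V}
    (hf : Function.Injective f) : IsGallai (χ ∘ Sym2.map f) := by
  rintro ⟨x, y, z, hxy, hyz, hxz, h⟩
  exact hχ ⟨f x, f y, f z, hf.ne hxy, hf.ne hyz, hf.ne hxz, h⟩

lemma isMonoCopy_top_iff {α : Type*} {H : SimpleGraph α} {χ : Sym2 V → Fin k} :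
    IsMonoCopy (⊤ : SimpleGraph V) (fun x y ↦ χ s(x, y)) H ↔ ∃ i, H ⊑ colorClass χ i := by
  constructor
  · rintro ⟨f, i, hf, h⟩
    exact ⟨i, ⟨⟨⟨f, fun hab ↦ colorClass_adj.2 ⟨(h _ _ hab).2, (h _ _ hab).1⟩⟩, hf⟩⟩⟩
  · rintro ⟨i, ⟨f⟩⟩
    refine ⟨f, i, f.injective, fun a b hab ↦ ?_⟩
    exact (colorClass_adj.1 (f.toHom.map_adj hab)).symm

end Gallai

section Ramsey

open Classical in
theorem exists_isNClique_colorClass {κ : Type*} [Finite κ] (r : κ → ℕ) :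
    ∃ N, ∀ {V : Type*} (χ : Sym2 V → κ) (A : Finset V), N < #A →
      ∃ i, ∃ B ⊆ A, (colorClass χ i).IsNClique (r i) B := by
  have := Fintype.ofFinite κ
  induction r using WellFoundedLT.induction with
  | ind r ih =>
  by_cases hr : ∃ i, r i = 0
  · obtain ⟨i, hi⟩ := hr
    exact ⟨0, fun χ A _ ↦ ⟨i, ∅, empty_subset A, by simp [hi]⟩⟩
  have hpos (i) : 0 < r i := Nat.pos_of_ne_zero fun hi ↦ hr ⟨i, hi⟩
  choose N hN using fun i ↦
    ih (Function.update r i (r i - 1)) (update_lt_self_iff.2 (Nat.sub_one_lt (hpos i).ne'))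
  refine ⟨∑ i, (N i + 1), fun {V} χ A hA ↦ ?_⟩
  obtain ⟨v, hv⟩ := card_pos.1 (hA.trans_le' (Nat.zero_le _))
  let nbrs (i : κ) : Finset V := {w ∈ A.erase v | χ s(v, w) = i}
  have hsum : ∑ i, #(nbrs i) = #A - 1 := by
    rw [← card_erase_of_mem hv]
    exact (card_eq_sum_card_fiberwise fun _ _ ↦ mem_coe.2 (mem_univ _)).symm
  obtain ⟨i, -, hi⟩ : ∃ i ∈ univ, N i + 1 ≤ #(nbrs i) :=
    exists_le_of_sum_le ⟨χ s(v, v), mem_univ _⟩ (by omega)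
  obtain ⟨l, B, hB, hBl⟩ := hN i χ (nbrs i) hi
  have hBA : B ⊆ A := hB.trans ((filter_subset _ _).trans (erase_subset _ _))
  obtain rfl | hli := eq_or_ne l i
  · refine ⟨l, insert v B, insert_subset hv hBA, ?_⟩
    have hvB : ∀ w ∈ B, (colorClass χ l).Adj v w := fun w hw ↦ by
      have hw' := mem_filter.1 (hB hw)
      exact colorClass_adj.2 ⟨hw'.2, (ne_of_mem_erase hw'.1).symm⟩
    simpa [Nat.sub_add_cancel (hpos l)] using hBl.insert hvB
  · exact ⟨l, B, hBA, by simpa [hli] using hBl⟩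

end Ramsey

section GallaiRamsey

variable {k N : ℕ} {α : Type*} {H : SimpleGraph α}

/-- The complete graph on `N` vertices has a Gallai `k`-coloring without monochromatic `H`. -/
def ExistsGallaiColoringAvoiding (k N : ℕ) {α : Type*} (H : SimpleGraph α) : Prop :=
  ∃ χ : Fin N → Fin N → Fin k, (∀ x y, χ x y = χ y x) ∧
    NoRainbowTriangle (⊤ : SimpleGraph (Fin N)) χ ∧ ¬ IsMonoCopy (⊤ : SimpleGraph (Fin N)) χ H

lemma existsGallaiColoringAvoiding_iff :
    ExistsGallaiColoringAvoiding k N H ↔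
      ∃ χ : Sym2 (Fin N) → Fin k, IsGallai χ ∧ ∀ i, H.Free (colorClass χ i) := by
  constructor
  · rintro ⟨χ, hsymm, hχ, hH⟩
    refine ⟨Sym2.lift ⟨χ, hsymm⟩, hχ, fun i hi ↦ hH ?_⟩
    exact isMonoCopy_top_iff (χ := Sym2.lift ⟨χ, hsymm⟩).2 ⟨i, hi⟩
  · rintro ⟨χ, hχ, hH⟩
    refine ⟨fun x y ↦ χ s(x, y), fun x y ↦ congrArg χ Sym2.eq_swap, hχ, fun h ↦ ?_⟩
    obtain ⟨i, hi⟩ := isMonoCopy_top_iff.1 h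
    exact hH i hi

lemma ExistsGallaiColoringAvoiding.mono {M : ℕ} (hMN : M ≤ N)
    (h : ExistsGallaiColoringAvoiding k N H) : ExistsGallaiColoringAvoiding k M H := by
  obtain ⟨χ, hχ, hH⟩ := existsGallaiColoringAvoiding_iff.1 h
  have hinj := Fin.castLE_injective hMN
  refine existsGallaiColoringAvoiding_iff.2 ⟨χ ∘ Sym2.map (Fin.castLE hMN), hχ.comp_map hinj, ?_⟩
  intro i hi
  rw [colorClass_comp_map hinj] at hi
  exact hH i (hi.trans ⟨(SimpleGraph.Embedding.comap ⟨_, hinj⟩ _).toCopy⟩)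

theorem exists_not_existsGallaiColoringAvoiding [Finite α] (k : ℕ) (H : SimpleGraph α) :
    ∃ N, ¬ ExistsGallaiColoringAvoiding k N H := by
  have := Fintype.ofFinite α
  obtain ⟨N, hN⟩ := exists_isNClique_colorClass (fun _ : Fin k ↦ Fintype.card α)
  refine ⟨N + 1, fun h ↦ ?_⟩
  obtain ⟨χ, -, hH⟩ := existsGallaiColoringAvoiding_iff.1 h
  obtain ⟨i, B, -, hB⟩ := hN χ univ (by simp)
  have htop : (⊤ : SimpleGraph α) ⊑ colorClass χ i := by
    by_contra hfree
    exact SimpleGraph.cliqueFree_iff_top_free.2 hfree B hB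
  exact hH i (htop.mono_left le_top)

theorem lt_gallaiRamsey [Finite α] (h : ExistsGallaiColoringAvoiding k N H) :
    N < GallaiRamsey k H := by
  have hforces (M : ℕ) : (∀ c : Fin M → Fin M → Fin k, (∀ x y, c x y = c y x) →
      NoRainbowTriangle (⊤ : SimpleGraph (Fin M)) c → IsMonoCopy (⊤ : SimpleGraph (Fin M)) c H) ↔
      ¬ ExistsGallaiColoringAvoiding k M H := by
    simp [ExistsGallaiColoringAvoiding]
  by_contra! hle
  refine (?_ : ¬ ExistsGallaiColoringAvoiding k (GallaiRamsey k H) H) (h.mono hle)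
  simp only [GallaiRamsey, hforces]
  exact Nat.sInf_mem (exists_not_existsGallaiColoringAvoiding k H)

lemma existsGallaiColoringAvoiding_two
    (h : ∃ χ : Fin N → Fin N → Fin 2, (∀ x y, χ x y = χ y x) ∧
      ¬ IsMonoCopy (⊤ : SimpleGraph (Fin N)) χ H) : ExistsGallaiColoringAvoiding 2 N H := by
  obtain ⟨χ, hsymm, hH⟩ := h
  refine ⟨χ, hsymm, isGallai_of_forall_eq_or (χ := Sym2.lift ⟨χ, hsymm⟩) (p := 0) (q := 1) ?_, hH⟩
  grind

lemma existsGallaiColoringAvoiding_ramsey2_sub_one [Nonempty α] (H : SimpleGraph α) :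
    ExistsGallaiColoringAvoiding 2 (Ramsey2 H - 1) H := by
  apply existsGallaiColoringAvoiding_two
  obtain h0 | hpos := Nat.eq_zero_or_pos (Ramsey2 H)
  · rw [h0]
    exact ⟨fun _ _ ↦ 0, fun _ _ ↦ rfl, fun ⟨f, _⟩ ↦ (f (Classical.arbitrary α)).elim0⟩
  · have hnot : Ramsey2 H - 1 ∉ _ := Nat.notMem_of_lt_sInf (Nat.sub_lt hpos Nat.one_pos)
    simpa using hnot

end GallaiRamsey

section Blowup

variable {ι α : Type*} {V : ι → Type*} {R : SimpleGraph ι} {G : ∀ j, SimpleGraph (V j)}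
  {H : SimpleGraph α}

/-- The graph obtained from `R` by substituting the graph `G j` for each vertex `j`. -/
def blowup (R : SimpleGraph ι) (G : ∀ j, SimpleGraph (V j)) : SimpleGraph (Σ j, V j) :=
  R.comap Sigma.fst ⊔ ⨆ j, (G j).map (Function.Embedding.sigmaMk j)

@[simp]
lemma blowup_adj_mk {j : ι} {a b : V j} : (blowup R G).Adj ⟨j, a⟩ ⟨j, b⟩ ↔ (G j).Adj a b := by
  simp only [blowup, sup_adj, comap_adj, SimpleGraph.irrefl, false_or, iSup_adj]
  constructor
  · rintro ⟨l, -, a', b', hab, ha, hb⟩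
    cases ha
    cases hb
    exact hab
  · exact fun hab ↦ ⟨j, by simp [hab.ne], a, b, hab, rfl, rfl⟩

lemma blowup_adj_of_fst_ne {x y : Σ j, V j} (hxy : x.1 ≠ y.1) :
    (blowup R G).Adj x y ↔ R.Adj x.1 y.1 := by
  simp only [blowup, sup_adj, comap_adj, iSup_adj, or_iff_left_iff_imp]
  rintro ⟨l, -, a, b, -, rfl, rfl⟩
  exact (hxy rfl).elim

lemma fst_ne_of_blowup_adj_of_eq_bot {x y : Σ j, V j} (hx : G x.1 = ⊥)
    (hxy : (blowup R G).Adj x y) : x.1 ≠ y.1 := by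
  obtain ⟨j, a⟩ := x
  obtain ⟨l, b⟩ := y
  rintro rfl
  simp_all

lemma isContained_of_forall_fst_eq (f : Copy H (blowup R G)) {j : ι} (hf : ∀ a, (f a).1 = j) :
    H ⊑ G j := by
  have hmk (a : α) : ∃ v : V j, f a = ⟨j, v⟩ := ⟨hf a ▸ (f a).2, by grind⟩
  choose g hg using hmk
  refine ⟨⟨⟨g, fun {a b} hab ↦ ?_⟩, fun a b hab ↦ f.injective ?_⟩⟩
  · have h := f.toHom.map_adj hab
    rwa [Copy.toHom_apply, Copy.toHom_apply, hg a, hg b, blowup_adj_mk] at h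
  · simp only [Copy.toHom_apply, hg]
    exact congrArg _ hab

lemma exists_isContained_of_adj_fst_eq (hH : H.Connected) (f : Copy H (blowup R G))
    (hf : ∀ a b, H.Adj a b → (f a).1 = (f b).1) : ∃ j, H ⊑ G j := by
  obtain ⟨a₀⟩ := hH.nonempty
  refine ⟨(f a₀).1, isContained_of_forall_fst_eq f fun a ↦ ?_⟩
  induction (H.reachable_iff_reflTransGen a₀ a).1 (hH.preconnected a₀ a) with
  | refl => rfl
  | tail _ hbc ih => rw [← hf _ _ hbc, ih]

lemma free_blowup_bot (hH : H.Connected) (hG : ∀ j, H.Free (G j)) :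
    H.Free (blowup (⊥ : SimpleGraph ι) G) := by
  rintro ⟨f⟩
  obtain ⟨j, hj⟩ := exists_isContained_of_adj_fst_eq hH f fun a b hab ↦ by
    by_contra hne
    exact (blowup_adj_of_fst_ne hne).1 (f.toHom.map_adj hab)
  exact hG j hj

lemma blowup_bot_eq_bot (hG : ∀ j, G j = ⊥) : blowup (⊥ : SimpleGraph ι) G = ⊥ := by
  ext ⟨j, a⟩ ⟨l, b⟩
  obtain rfl | hjl := eq_or_ne j l
  · simp [hG]
  · simp [blowup_adj_of_fst_ne, hjl]

end Blowup

section Substitution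

variable {ι : Type*} {V : ι → Type*}

open Classical in
/-- The edge coloring that colors the edges inside each part `V j` by `χ j`, and the edges between
distinct parts by `ρ`. -/
noncomputable def substitute {κ : Type*} (ρ : Sym2 ι → κ) (χ : ∀ j, Sym2 (V j) → κ) :
    Sym2 (Σ j, V j) → κ :=
  Sym2.lift ⟨fun x y ↦ if h : x.1 = y.1 then χ y.1 s(h ▸ x.2, y.2) else ρ s(x.1, y.1), by
    rintro ⟨j, a⟩ ⟨l, b⟩
    obtain rfl | hjl := eq_or_ne j l
    · simp [Sym2.eq_swap]
    · simp [hjl, hjl.symm, Sym2.eq_swap]⟩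

lemma substitute_mk {κ : Type*} (ρ : Sym2 ι → κ) (χ : ∀ j, Sym2 (V j) → κ) (j : ι) (a b : V j) :
    substitute ρ χ s(⟨j, a⟩, ⟨j, b⟩) = χ j s(a, b) := by
  simp [substitute]

lemma substitute_of_fst_ne {κ : Type*} (ρ : Sym2 ι → κ) (χ : ∀ j, Sym2 (V j) → κ)
    {x y : Σ j, V j} (hxy : x.1 ≠ y.1) : substitute ρ χ s(x, y) = ρ s(x.1, y.1) := by
  simp [substitute, hxy]

lemma colorClass_substitute {κ : Type*} (ρ : Sym2 ι → κ) (χ : ∀ j, Sym2 (V j) → κ) (i : κ) :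
    colorClass (substitute ρ χ) i = blowup (colorClass ρ i) fun j ↦ colorClass (χ j) i := by
  ext x y
  obtain ⟨j, a⟩ := x
  obtain ⟨l, b⟩ := y
  obtain rfl | hjl := eq_or_ne j l
  · simp [substitute_mk]
  · simp [blowup_adj_of_fst_ne, substitute_of_fst_ne, hjl]

lemma IsGallai.substitute {k : ℕ} {ρ : Sym2 ι → Fin k} {χ : ∀ j, Sym2 (V j) → Fin k}
    (hρ : IsGallai ρ) (hχ : ∀ j, IsGallai (χ j)) : IsGallai (substitute ρ χ) := by
  rintro ⟨⟨j, a⟩, ⟨l, b⟩, ⟨n, c⟩, hxy, hyz, hxz, h⟩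
  have hcross {x y : Σ j, V j} (hne : x.1 ≠ y.1) := substitute_of_fst_ne ρ χ hne
  have hswap (x y : ι) : ρ s(x, y) = ρ s(y, x) := congrArg ρ Sym2.eq_swap
  by_cases hjln : j = l ∧ l = n
  · obtain ⟨rfl, rfl⟩ := hjln
    simp only [substitute_mk] at h
    exact hχ j ⟨a, b, c, by simpa using hxy, by simpa using hyz, by simpa using hxz, h⟩
  · beta_reduce at h
    by_cases hjl : j = l <;> by_cases hln : l = n <;> by_cases hjn : j = n <;>
      grind [hρ.eq_or_eq_or_eq]

end Substitution

section Star

variable {V : Type*} {G : SimpleGraph V} {h : ℕ}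

lemma starGraph_isContained_of_injective {v : V} {q : Fin h → V} (hq : Function.Injective q)
    (hv : ∀ t, G.Adj v (q t)) : starGraph (0 : Fin (h + 1)) ⊑ G := by
  refine ⟨⟨⟨Fin.cons v q, fun {a b} hab ↦ ?_⟩, Fin.cons_injective_iff.2 ⟨?_, hq⟩⟩⟩
  · cases a using Fin.cases <;> cases b using Fin.cases <;> simp_all [(hv _).symm]
  · rintro ⟨t, rfl⟩
    exact (hv t).ne rfl

lemma starGraph_free_of_degree_lt [Fintype V] [DecidableRel G.Adj] (hG : ∀ v, G.degree v < h) :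
    (starGraph (0 : Fin (h + 1))).Free G := by
  rintro ⟨f⟩
  have hdeg : (starGraph (0 : Fin (h + 1))).degree 0 = h := by
    rw [degree_starGraph_center, Fintype.card_fin, Nat.add_sub_cancel]
  exact (hG (f 0)).not_ge (hdeg.symm.trans_le (f.degree_le 0))

end Star

section Kipas

lemma kipasG_adj_zero_succ {m : ℕ} (a : Fin m) : (kipasG m).Adj 0 a.succ := by
  simp [kipasG, (Fin.succ_ne_zero a).symm]

lemma kipasG_adj_succ_succ {m : ℕ} {a b : Fin m} (hab : (pathGraph m).Adj a b) :
    (kipasG m).Adj a.succ b.succ := by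
  refine (fromRel_adj ..).2 ⟨(Fin.succ_injective m).ne hab.ne, ?_⟩
  obtain hab | hab := pathGraph_adj.1 hab
  · exact .inl (.inr (by simp [← hab]))
  · exact .inr (.inr (by simp [← hab]))

lemma kipasG_connected (m : ℕ) : (kipasG m).Connected := by
  refine .of_isUniversal (v := 0) fun b hb ↦ ?_
  obtain ⟨a, rfl⟩ := Fin.exists_succ_eq.2 hb.symm
  exact kipasG_adj_zero_succ a

variable {ι : Type*} {V : ι → Type*} {R : SimpleGraph ι} {G : ∀ j, SimpleGraph (V j)} {h : ℕ}

lemma fst_eq_of_adj_of_fst_ne (hR : R.CliqueFree 3) {x y z : Σ j, V j}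
    (hxy : (blowup R G).Adj x y) (hxz : (blowup R G).Adj x z) (hyz : (blowup R G).Adj y z)
    (hy : x.1 ≠ y.1) (hz : x.1 ≠ z.1) : y.1 = z.1 := by
  by_contra hne
  rw [blowup_adj_of_fst_ne ‹_›] at hxy hxz hyz
  exact isIndepSet_neighborSet_of_triangleFree R hR x.1 hxy hxz hne hyz

lemma pathGraph_isContained_of_center_eq_bot {m : ℕ} (hR : R.CliqueFree 3)
    (f : Copy (kipasG (m + 1)) (blowup R G)) (h0 : G (f 0).1 = ⊥) :
    ∃ j, pathGraph (m + 1) ⊑ G j := by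
  let path : Copy (pathGraph (m + 1)) (blowup R G) :=
    ⟨f.toHom.comp ⟨Fin.succ, kipasG_adj_succ_succ⟩, f.injective.comp (Fin.succ_injective _)⟩
  have hcenter (a) : (blowup R G).Adj (f 0) (path a) := f.toHom.map_adj (kipasG_adj_zero_succ a)
  have hne (a) := fst_ne_of_blowup_adj_of_eq_bot h0 (hcenter a)
  exact exists_isContained_of_adj_fst_eq (pathGraph_connected m) path fun a b hab ↦
    fst_eq_of_adj_of_fst_ne hR (hcenter a) (hcenter b) (path.toHom.map_adj hab) (hne a) (hne b)

/- No two consecutive rim vertices leave the part of the center, so that part contains at least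
`h` of the `2 * h + 1` rim vertices. -/
lemma starGraph_isContained_of_neighbors_eq_bot (hR : R.CliqueFree 3)
    (f : Copy (kipasG (2 * h + 1)) (blowup R G)) (hbot : ∀ l, R.Adj (f 0).1 l → G l = ⊥) :
    starGraph (0 : Fin (h + 1)) ⊑ G (f 0).1 := by
  have hcenter (a : Fin (2 * h + 1)) : (blowup R G).Adj (f 0) (f a.succ) :=
    f.toHom.map_adj (kipasG_adj_zero_succ a)
  have hmeet {a b} (hab : (pathGraph (2 * h + 1)).Adj a b) :
      (f a.succ).1 = (f 0).1 ∨ (f b.succ).1 = (f 0).1 := by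
    by_contra! hne
    have hadj := f.toHom.map_adj (kipasG_adj_succ_succ hab)
    have ha : G (f a.succ).1 = ⊥ := hbot _ ((blowup_adj_of_fst_ne hne.1.symm).1 (hcenter a))
    exact fst_ne_of_blowup_adj_of_eq_bot ha hadj
      (fst_eq_of_adj_of_fst_ne hR (hcenter a) (hcenter b) hadj hne.1.symm hne.2.symm)
  have hpick (t : Fin h) : ∃ a : Fin (2 * h + 1), a.val / 2 = t ∧ (f a.succ).1 = (f 0).1 := by
    obtain h0 | h1 := hmeet (a := ⟨2 * t, by omega⟩) (b := ⟨2 * t + 1, by omega⟩)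
      (pathGraph_adj.2 (.inl rfl))
    · exact ⟨_, by simp, h0⟩
    · exact ⟨_, by simp; omega, h1⟩
  choose a ha hfst using hpick
  have hmk (t) : ∃ v : V (f 0).1, f (a t).succ = ⟨(f 0).1, v⟩ :=
    ⟨hfst t ▸ (f (a t).succ).2, by grind⟩
  choose q hq using hmk
  refine starGraph_isContained_of_injective (v := (f 0).2) (q := q) (fun s t hst ↦ ?_) fun t ↦ ?_
  · have hast : a s = a t :=
      Fin.succ_injective _ (f.injective (by simp only [Copy.toHom_apply, hq, hst]))
    exact Fin.ext (by rw [← ha s, ← ha t, hast])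
  · exact blowup_adj_mk.1 (hq t ▸ hcenter (a t))

theorem kipasG_free_blowup (hR : R.CliqueFree 3) (hpath : ∀ j, (pathGraph (2 * h + 1)).Free (G j))
    (hstar : ∀ j, (starGraph (0 : Fin (h + 1))).Free (G j))
    (hbot : ∀ j l, R.Adj j l → G j = ⊥ ∨ G l = ⊥) : (kipasG (2 * h + 1)).Free (blowup R G) := by
  rintro ⟨f⟩
  by_cases h0 : G (f 0).1 = ⊥
  · obtain ⟨j, hj⟩ := pathGraph_isContained_of_center_eq_bot hR f h0
    exact hpath j hj
  · exact hstar _ <| starGraph_isContained_of_neighbors_eq_bot hR f fun l hl ↦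
      (hbot _ l hl).resolve_left h0

end Kipas

section Circulant

lemma exists_isRegularOfDegree_two_mul {r c : ℕ} [NeZero c] (hrc : 2 * r < c) :
    ∃ (G : SimpleGraph (ZMod c)) (_ : DecidableRel G.Adj), G.IsRegularOfDegree (2 * r) := by
  classical
  let jumps : Finset ℕ := Icc 1 r ∪ Ico (c - r) c
  have hjumps : #jumps = 2 * r := by
    rw [card_union_of_disjoint (disjoint_left.2 fun d ↦ by simp only [mem_Icc, mem_Ico]; omega),
      Nat.card_Icc, Nat.card_Ico]
    omega
  let G : SimpleGraph (ZMod c) := circulantGraph {d | d.val ∈ Icc 1 r}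
  have hadj (v w : ZMod c) : G.Adj v w ↔ (w - v).val ∈ jumps := by
    have hneg := ZMod.neg_val (w - v)
    have hlt := ZMod.val_lt (w - v)
    have hzero : v = w ↔ (w - v).val = 0 := by rw [ZMod.val_eq_zero, sub_eq_zero, eq_comm]
    simp only [G, jumps, circulantGraph_adj, Set.mem_ofPred_eq, mem_union, mem_Icc, mem_Ico,
      ← neg_sub w v, hneg, hzero, ← ZMod.val_eq_zero]
    split_ifs <;> omega
  refine ⟨G, inferInstance, fun v ↦ ?_⟩
  have hval {d : ℕ} (hd : d ∈ jumps) : (d : ZMod c).val = d :=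
    ZMod.val_cast_of_lt (by simp only [jumps, mem_union, mem_Icc, mem_Ico] at hd; omega)
  rw [← hjumps, ← card_neighborFinset_eq_degree]
  refine card_nbij' (fun w ↦ (w - v).val) (fun d ↦ d + v) (fun w hw ↦ ?_) (fun d hd ↦ ?_)
    (fun w _ ↦ by simp) fun d hd ↦ by simp [hval hd]
  · simpa [hadj] using hw
  · simpa [hadj, hval hd] using hd

end Circulant

section ColorRole

/-- What a color class is required to satisfy while a coloring without a monochromatic
`kipasG (2 * h + 1)` is built up: the color is unused, or its class contains neither a path on
`2 * h + 1` vertices nor a vertex of degree `h`, or its class merely contains no kipas. -/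
inductive ColorRole
  | absent
  | sparse
  | kipasFree

/-- `P.Holds h G` says that the color class `G` satisfies the requirement `P`. -/
def ColorRole.Holds {V : Type*} (h : ℕ) (G : SimpleGraph V) : ColorRole → Prop
  | absent => G = ⊥
  | sparse => (pathGraph (2 * h + 1)).Free G ∧ (starGraph (0 : Fin (h + 1))).Free G
  | kipasFree => (kipasG (2 * h + 1)).Free G

variable {ι : Type*} {h : ℕ} {P : ColorRole}

lemma free_bot_of_connected {α V : Type*} [Nontrivial α] {H : SimpleGraph α} (hH : H.Connected) :
    H.Free (⊥ : SimpleGraph V) := by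
  apply free_bot
  rintro rfl
  exact not_connected_bot hH

lemma ColorRole.Holds.free {V : Type*} {G : SimpleGraph V} (hG : P.Holds h G) (hP : P ≠ kipasFree)
    (hh : 0 < h) :
    (pathGraph (2 * h + 1)).Free G ∧ (starGraph (0 : Fin (h + 1))).Free G := by
  have : Nontrivial (Fin (h + 1)) := Fin.nontrivial_iff_two_le.2 (by omega)
  have : Nontrivial (Fin (2 * h + 1)) := Fin.nontrivial_iff_two_le.2 (by omega)
  cases P with
  | absent =>
    obtain rfl : G = ⊥ := hG
    exact ⟨free_bot_of_connected (pathGraph_connected _),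
      free_bot_of_connected (connected_starGraph _)⟩
  | sparse => exact hG
  | kipasFree => exact (hP rfl).elim

lemma ColorRole.Holds.sparse_of_degree_lt {V : Type*} [Fintype V] {G : SimpleGraph V}
    [DecidableRel G.Adj] (hdeg : ∀ v, G.degree v < h) (hcard : Fintype.card V ≤ 2 * h) :
    ColorRole.sparse.Holds h G := by
  refine ⟨?_, starGraph_free_of_degree_lt hdeg⟩
  rintro ⟨f⟩
  have hle := Fintype.card_le_of_injective f f.injective
  rw [Fintype.card_fin] at hle
  omega

variable {V : ι → Type*} {G : ∀ j, SimpleGraph (V j)}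

lemma ColorRole.Holds.blowup_bot (hG : ∀ j, P.Holds h (G j)) :
    P.Holds h (blowup (⊥ : SimpleGraph ι) G) := by
  cases P with
  | absent => exact blowup_bot_eq_bot hG
  | sparse =>
    exact ⟨free_blowup_bot (pathGraph_connected _) fun j ↦ (hG j).1,
      free_blowup_bot (connected_starGraph _) fun j ↦ (hG j).2⟩
  | kipasFree => exact free_blowup_bot (kipasG_connected _) hG

lemma kipasG_free_blowup_of_holds {R : SimpleGraph ι} {P : ι → ColorRole} (hh : 0 < h)
    (hR : R.CliqueFree 3) (hG : ∀ j, (P j).Holds h (G j)) (hP : ∀ j, P j ≠ .kipasFree)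
    (habsent : ∀ j l, R.Adj j l → P j = .absent ∨ P l = .absent) :
    (kipasG (2 * h + 1)).Free (blowup R G) := by
  have heq_bot {j} (hj : P j = .absent) : G j = ⊥ := by simpa [hj, ColorRole.Holds] using hG j
  exact kipasG_free_blowup hR (fun j ↦ ((hG j).free (hP j) hh).1)
    (fun j ↦ ((hG j).free (hP j) hh).2) fun j l hjl ↦ (habsent j l hjl).imp heq_bot heq_bot

end ColorRole

section HasGallaiColoring

variable {k h : ℕ}

/-- Some complete graph on `N` vertices has a Gallai coloring in which every color `i` plays the
role `P i`. -/
def HasGallaiColoring (h N : ℕ) (P : Fin k → ColorRole) : Prop :=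
  ∃ (V : Type) (_ : Fintype V) (χ : Sym2 V → Fin k),
    Fintype.card V = N ∧ IsGallai χ ∧ ∀ i, (P i).Holds h (colorClass χ i)

theorem HasGallaiColoring.substitute {ι : Type} [Fintype ι] {N : ι → ℕ}
    {P : ι → Fin k → ColorRole} {Q : Fin k → ColorRole} {ρ : Sym2 ι → Fin k} (hh : 0 < h)
    (hρ : IsGallai ρ) (hparts : ∀ j, HasGallaiColoring h (N j) (P j))
    (hcolor : ∀ i, (colorClass ρ i = ⊥ ∧ ∀ j, P j i = Q i) ∨
      (Q i = .kipasFree ∧ (colorClass ρ i).CliqueFree 3 ∧ (∀ j, P j i ≠ .kipasFree) ∧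
        ∀ j l, (colorClass ρ i).Adj j l → P j i = .absent ∨ P l i = .absent)) :
    HasGallaiColoring h (∑ j, N j) Q := by
  choose V _ χ hcard hχ hP using hparts
  refine ⟨Σ j, V j, inferInstance, _root_.substitute ρ χ, by simp [hcard], hρ.substitute hχ,
    fun i ↦ ?_⟩
  rw [colorClass_substitute]
  obtain ⟨hbot, hPQ⟩ | ⟨hQ, htri, hne, habsent⟩ := hcolor i
  · rw [hbot]
    exact ColorRole.Holds.blowup_bot fun j ↦ hPQ j ▸ hP j i
  · rw [hQ]
    exact kipasG_free_blowup_of_holds hh htri (fun j ↦ hP j i) hne habsent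

/-- The roles after the first `s` colors have been used up: these need only avoid the kipas, the
colors in `A` stay sparse, and all others are unused. -/
def stageRole (s : ℕ) (A : Finset (Fin k)) (i : Fin k) : ColorRole :=
  if i < s then .kipasFree else if i ∈ A then .sparse else .absent

lemma stageRole_of_lt {s : ℕ} {i : Fin k} (hi : i < s) (A : Finset (Fin k)) :
    stageRole s A i = .kipasFree :=
  if_pos hi

lemma stageRole_ne_kipasFree {s : ℕ} {i : Fin k} (hi : s ≤ i) (A : Finset (Fin k)) :
    stageRole s A i ≠ .kipasFree := by
  unfold stageRole
  split_ifs <;> first | omega | simp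

lemma stageRole_eq_absent {s : ℕ} {i : Fin k} {A : Finset (Fin k)} (hi : s ≤ i) (hA : i ∉ A) :
    stageRole s A i = .absent := by
  rw [stageRole, if_neg hi.not_gt, if_neg hA]

lemma stageRole_eq_sparse {s : ℕ} {i : Fin k} {A : Finset (Fin k)} (hi : s ≤ i) (hA : i ∈ A) :
    stageRole s A i = .sparse := by
  rw [stageRole, if_neg hi.not_gt, if_pos hA]

lemma stageRole_congr {s t : ℕ} {i : Fin k} {A B : Finset (Fin k)} (hst : i < s ↔ i < t)
    (hAB : i ∈ A ↔ i ∈ B) : stageRole s A i = stageRole t B i := by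
  simp only [stageRole, hst, hAB]

theorem HasGallaiColoring.substitute_twoColoring {ι : Type} [Fintype ι] {R : SimpleGraph ι}
    {s : ℕ} {N : ι → ℕ} {A : ι → Finset (Fin k)} {B : Finset (Fin k)} {p q : Fin k} (hh : 0 < h)
    (hp : p = s) (hq : q = s + 1) (hR : R.CliqueFree 3) (hRc : Rᶜ.CliqueFree 3)
    (hAB : ∀ j i, i ≠ p → i ≠ q → (i ∈ A j ↔ i ∈ B))
    (hpA : ∀ j l, R.Adj j l → p ∉ A j ∨ p ∉ A l) (hqA : ∀ j l, Rᶜ.Adj j l → q ∉ A j ∨ q ∉ A l)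
    (hparts : ∀ j, HasGallaiColoring h (N j) (stageRole s (A j))) :
    HasGallaiColoring h (∑ j, N j) (stageRole (s + 2) B) := by
  have hpq : p ≠ q := by omega
  refine .substitute hh (isGallai_of_forall_eq_or (twoColoring_eq_or R p q)) hparts fun i ↦ ?_
  obtain rfl | hip := eq_or_ne i p
  · rw [colorClass_twoColoring_left _ hpq]
    exact .inr ⟨stageRole_of_lt (by omega) _, hR, fun j ↦ stageRole_ne_kipasFree hp.ge _,
      fun j l hjl ↦ (hpA j l hjl).imp (stageRole_eq_absent hp.ge) (stageRole_eq_absent hp.ge)⟩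
  obtain rfl | hiq := eq_or_ne i q
  · have hsi : s ≤ i := by omega
    rw [colorClass_twoColoring_right _ hpq]
    exact .inr ⟨stageRole_of_lt (by omega) _, hRc, fun j ↦ stageRole_ne_kipasFree hsi _,
      fun j l hjl ↦ (hqA j l hjl).imp (stageRole_eq_absent hsi) (stageRole_eq_absent hsi)⟩
  · exact .inl ⟨colorClass_twoColoring_of_ne _ hip hiq,
      fun j ↦ stageRole_congr (by omega) (hAB j i hip hiq)⟩

lemma cliqueFree_three_of_forall_not_adj {V : Type*} {G : SimpleGraph V}
    (hG : ∀ x y z, G.Adj x y → G.Adj x z → ¬ G.Adj y z) : G.CliqueFree 3 := by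
  classical
  intro s hs
  obtain ⟨x, y, z, hxy, hxz, hyz, -⟩ := is3Clique_iff.1 hs
  exact hG x y z hxy hxz hyz

theorem HasGallaiColoring.pentagon {s N₀ N₁ N₂ : ℕ} {A A₁ A₂ : Finset (Fin k)} {p q : Fin k}
    (hh : 0 < h) (hp : p = s) (hq : q = s + 1) (hA₁ : A₁.erase p = A) (hA₂ : A₂.erase q = A)
    (h₀ : HasGallaiColoring h N₀ (stageRole s A)) (h₁ : HasGallaiColoring h N₁ (stageRole s A₁))
    (h₂ : HasGallaiColoring h N₂ (stageRole s A₂)) :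
    HasGallaiColoring h (N₀ + 2 * N₁ + 2 * N₂) (stageRole (s + 2) A) := by
  have hpq : p ≠ q := by omega
  have hpA : p ∉ A ∧ p ∉ A₂ := by grind
  have hqA : q ∉ A ∧ q ∉ A₁ := by grind
  -- Color `p` forms a 5-cycle on the parts and may be sparse inside the non-adjacent parts 1 and 4;
  -- color `q` forms the complementary 5-cycle and may be sparse inside parts 2 and 3.
  have hcycle : ∀ j l, (cycleGraph 5).Adj j l →
      (j = 0 ∨ j = 2 ∨ j = 3) ∨ l = 0 ∨ l = 2 ∨ l = 3 := by decide
  have hcompl : ∀ j l, (cycleGraph 5)ᶜ.Adj j l →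
      (j = 0 ∨ j = 1 ∨ j = 4) ∨ l = 0 ∨ l = 1 ∨ l = 4 := by decide
  have hsum : N₀ + 2 * N₁ + 2 * N₂ = ∑ j, ![N₀, N₁, N₂, N₂, N₁] j := by
    simp only [Fin.sum_univ_five, Matrix.cons_val]
    ring
  rw [hsum]
  refine substitute_twoColoring (A := ![A, A₁, A₂, A₂, A₁]) hh hp hq
    (cliqueFree_three_of_forall_not_adj (by decide))
    (cliqueFree_three_of_forall_not_adj (by decide))
    (fun j i hip hiq ↦ ?_) (fun j l hjl ↦ (hcycle j l hjl).imp ?_ ?_)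
    (fun j l hjl ↦ (hcompl j l hjl).imp ?_ ?_) fun j ↦ ?_
  · fin_cases j <;> simp <;> grind
  · rintro (rfl | rfl | rfl) <;> simp [hpA]
  · rintro (rfl | rfl | rfl) <;> simp [hpA]
  · rintro (rfl | rfl | rfl) <;> simp [hqA]
  · rintro (rfl | rfl | rfl) <;> simp [hqA]
  · fin_cases j <;> assumption

theorem HasGallaiColoring.double {s N : ℕ} {q : Fin k} (hh : 0 < h) (hq : q = s)
    (hN : HasGallaiColoring h N (stageRole s (∅ : Finset (Fin k)))) :
    HasGallaiColoring h (2 * N) (stageRole (s + 1) (∅ : Finset (Fin k))) := by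
  have hsum : 2 * N = ∑ _ : Fin 2, N := by simp
  rw [hsum]
  refine .substitute (ρ := fun _ ↦ q) hh (isGallai_of_forall_eq_or (q := q) fun _ ↦ .inl rfl)
    (fun _ ↦ hN) fun i ↦ ?_
  obtain rfl | hi := eq_or_ne i q
  · rw [colorClass_const]
    exact .inr ⟨stageRole_of_lt (by omega) _, cliqueFree_of_card_lt (by simp),
      fun _ ↦ stageRole_ne_kipasFree hq.ge _,
      fun _ _ _ ↦ .inl (stageRole_eq_absent hq.ge (notMem_empty _))⟩
  · exact .inl ⟨colorClass_eq_bot fun _ ↦ hi.symm, fun _ ↦ stageRole_congr (by omega) .rfl⟩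

theorem hasGallaiColoring_of_isRegularOfDegree {V : Type} [Fintype V] {G : SimpleGraph V}
    [DecidableRel G.Adj] {r : ℕ} {α β : Fin k} (hαβ : α ≠ β) (hG : G.IsRegularOfDegree r)
    (hr : r < h) (hr' : Fintype.card V - 1 - r < h) :
    HasGallaiColoring h (Fintype.card V) (stageRole 0 {α, β}) := by
  classical
  refine ⟨V, inferInstance, twoColoring G α β, rfl,
    isGallai_of_forall_eq_or (twoColoring_eq_or G α β), fun i ↦ ?_⟩
  obtain rfl | hiα := eq_or_ne i α
  · rw [colorClass_twoColoring_left _ hαβ, stageRole_eq_sparse (Nat.zero_le _) (by simp)]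
    exact .sparse_of_degree_lt (fun v ↦ (hG v).trans_lt hr) (by omega)
  obtain rfl | hiβ := eq_or_ne i β
  · rw [colorClass_twoColoring_right _ hαβ, stageRole_eq_sparse (Nat.zero_le _) (by simp)]
    exact .sparse_of_degree_lt (fun v ↦ (hG.compl v).trans_lt hr') (by omega)
  · rw [colorClass_twoColoring_of_ne _ hiα hiβ,
      stageRole_eq_absent (Nat.zero_le _) (by simp [hiα, hiβ])]
    rfl

theorem HasGallaiColoring.mul_five_pow {N s : ℕ} {A : Finset (Fin k)} (hh : 0 < h)
    (hs : 2 * s ≤ k) (hA : ∀ i ∈ A, 2 * s ≤ i) (hN : HasGallaiColoring h N (stageRole 0 A)) :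
    HasGallaiColoring h (N * 5 ^ s) (stageRole (2 * s) A) := by
  induction s with
  | zero => simpa using hN
  | succ s ih =>
    have hs' := ih (by omega) fun i hi ↦ by have := hA i hi; omega
    have herase (i : Fin k) (hi : i < 2 * (s + 1)) : A.erase i = A :=
      erase_eq_of_notMem fun hiA ↦ (hA i hiA).not_gt hi
    have hsize : N * 5 ^ (s + 1) = N * 5 ^ s + 2 * (N * 5 ^ s) + 2 * (N * 5 ^ s) := by ring
    rw [hsize]
    exact pentagon (p := ⟨2 * s, by omega⟩) (q := ⟨2 * s + 1, by omega⟩) hh rfl rfl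
      (herase _ (by dsimp; omega)) (herase _ (by dsimp; omega)) hs' hs' hs'

lemma hasGallaiColoring_self (hh : 0 < h) (α : Fin k) :
    HasGallaiColoring h h (stageRole 0 {α}) := by
  refine ⟨Fin h, inferInstance, fun _ ↦ α, Fintype.card_fin h,
    isGallai_of_forall_eq_or (q := α) fun _ ↦ .inl rfl, fun i ↦ ?_⟩
  obtain rfl | hi := eq_or_ne i α
  · rw [colorClass_const, stageRole_eq_sparse (Nat.zero_le _) (mem_singleton_self i)]
    exact .sparse_of_degree_lt (fun v ↦ by simpa) (by simp; omega)
  · rw [colorClass_eq_bot fun _ ↦ hi.symm,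
      stageRole_eq_absent (Nat.zero_le _) (notMem_singleton.2 hi)]
    rfl

lemma sum_range_mul_five_pow_sub_one (h e t : ℕ) :
    ∑ s ∈ range t, 4 * (h + (h + e) * (5 ^ (s + 1) - 1)) + 4 * e * t
      = 5 * (h + e) * (5 ^ t - 1) := by
  induction t with
  | zero => simp
  | succ t ih =>
    obtain ⟨X, hX⟩ := Nat.exists_eq_add_one.2 (Nat.pow_pos (n := t) (show 0 < 5 by decide))
    rw [hX, Nat.add_sub_cancel] at ih
    rw [sum_range_succ, pow_succ, hX, show (X + 1) * 5 - 1 = 5 * X + 4 by omega]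
    linear_combination ih

section Tower

variable {c : ℕ} (hh : 0 < h)
  (hc : ∀ α β : Fin k, α ≠ β → HasGallaiColoring h c (stageRole 0 {α, β}))
include hh hc

theorem hasGallaiColoring_singleton {s : ℕ} {α : Fin k} (hα : 2 * s ≤ α) :
    HasGallaiColoring h (h + c * (5 ^ s - 1)) (stageRole (2 * s) {α}) := by
  induction s with
  | zero => simpa using hasGallaiColoring_self hh α
  | succ s ih =>
    have hpair (i : Fin k) (hi : 2 * s ≤ i) (hiα : i < α) :
        HasGallaiColoring h (c * 5 ^ s) (stageRole (2 * s) {i, α}) :=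
      (hc i α hiα.ne).mul_five_pow hh (by omega) (by grind)
    have hp : (⟨2 * s, by omega⟩ : Fin k) < α := Fin.lt_def.2 (by simp; omega)
    have hq : (⟨2 * s + 1, by omega⟩ : Fin k) < α := Fin.lt_def.2 (by simp; omega)
    have hsize : h + c * (5 ^ (s + 1) - 1)
        = h + c * (5 ^ s - 1) + 2 * (c * 5 ^ s) + 2 * (c * 5 ^ s) := by
      obtain ⟨X, hX⟩ := Nat.exists_eq_add_one.2 (Nat.pow_pos (n := s) (show 0 < 5 by decide))
      rw [pow_succ, hX, show (X + 1) * 5 - 1 = 5 * X + 4 by omega, Nat.add_sub_cancel]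
      ring
    rw [hsize]
    exact .pentagon hh rfl rfl (erase_insert (notMem_singleton.2 hp.ne))
      (erase_insert (notMem_singleton.2 hq.ne)) (ih (by omega)) (hpair _ le_rfl hp)
      (hpair _ (Nat.le_succ _) hq)

theorem HasGallaiColoring.add_sum_range {n t : ℕ} (ht : 2 * (t + 1) ≤ k)
    (hn : HasGallaiColoring h n (stageRole 2 (∅ : Finset (Fin k)))) :
    HasGallaiColoring h (n + ∑ s ∈ range t, 4 * (h + c * (5 ^ (s + 1) - 1)))
      (stageRole (2 * (t + 1)) (∅ : Finset (Fin k))) := by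
  induction t with
  | zero => simpa using hn
  | succ t ih =>
    have hsingle (i : Fin k) (hi : 2 * (t + 1) ≤ i) := hasGallaiColoring_singleton hh hc hi
    have hsum (a b : ℕ) : a + (b + 4 * (h + c * (5 ^ (t + 1) - 1)))
        = a + b + 2 * (h + c * (5 ^ (t + 1) - 1)) + 2 * (h + c * (5 ^ (t + 1) - 1)) := by ring
    rw [sum_range_succ, hsum]
    exact pentagon (p := ⟨2 * (t + 1), by omega⟩) (q := ⟨2 * (t + 1) + 1, by omega⟩) hh rfl rfl
      (erase_singleton _) (erase_singleton _) (ih (by omega)) (hsingle _ le_rfl)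
      (hsingle _ (Nat.le_succ _))

end Tower

theorem hasGallaiColoring_of_existsGallaiColoringAvoiding_two {n : ℕ} (hk : 2 ≤ k)
    (hn : ExistsGallaiColoringAvoiding 2 n (kipasG (2 * h + 1))) :
    HasGallaiColoring h n (stageRole 2 (∅ : Finset (Fin k))) := by
  obtain ⟨χ, hχ, hfree⟩ := existsGallaiColoringAvoiding_iff.1 hn
  refine ⟨Fin n, inferInstance, Fin.castLE hk ∘ χ, Fintype.card_fin n, hχ.comp _, fun i ↦ ?_⟩
  by_cases hi : (i : ℕ) < 2
  · rw [stageRole_of_lt hi]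
    exact (colorClass_comp (Fin.castLE_injective hk) χ ⟨i, hi⟩).symm ▸ hfree ⟨i, hi⟩
  · rw [stageRole_eq_absent (not_lt.1 hi) (notMem_empty i)]
    exact colorClass_eq_bot fun e he ↦ hi (he ▸ (χ e).isLt)

theorem HasGallaiColoring.existsGallaiColoringAvoiding {N : ℕ}
    (hN : HasGallaiColoring h N (stageRole k (∅ : Finset (Fin k)))) :
    ExistsGallaiColoringAvoiding k N (kipasG (2 * h + 1)) := by
  obtain ⟨V, _, χ, hcard, hχ, hfree⟩ := hN
  let f := (Fintype.equivFinOfCardEq hcard).symm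
  refine existsGallaiColoringAvoiding_iff.2
    ⟨χ ∘ Sym2.map f, hχ.comp_map f.injective, fun i hi ↦ ?_⟩
  rw [colorClass_comp_map f.injective] at hi
  have hfree_i := hfree i
  rw [stageRole_of_lt i.isLt] at hfree_i
  exact hfree_i (hi.trans ⟨(SimpleGraph.Embedding.comap f.toEmbedding _).toCopy⟩)

end HasGallaiColoring

section LowerBound

theorem ExistsGallaiColoringAvoiding.kipasG_two_mul_add_three {h r n : ℕ}
    (hn : ExistsGallaiColoringAvoiding 2 n (kipasG (2 * h + 1))) (hr : 2 * r < h) (t : ℕ) :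
    ExistsGallaiColoringAvoiding (2 * t + 3)
      (2 * (n + 5 * (h + 2 * r) * (5 ^ t - 1) - 8 * r * t)) (kipasG (2 * h + 1)) := by
  have hh : 0 < h := by omega
  have hleaf (α β : Fin (2 * t + 3)) (hαβ : α ≠ β) :
      HasGallaiColoring h (h + 2 * r) (stageRole 0 {α, β}) := by
    have : NeZero (h + 2 * r) := ⟨by omega⟩
    obtain ⟨G, _, hG⟩ := exists_isRegularOfDegree_two_mul (show 2 * r < h + 2 * r by omega)
    rw [← ZMod.card (h + 2 * r)]
    refine hasGallaiColoring_of_isRegularOfDegree hαβ hG hr ?_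
    rw [ZMod.card]
    omega
  have hbase : HasGallaiColoring h n (stageRole 2 (∅ : Finset (Fin (2 * t + 3)))) :=
    hasGallaiColoring_of_existsGallaiColoringAvoiding_two (by omega) hn
  have hsize : n + 5 * (h + 2 * r) * (5 ^ t - 1) - 8 * r * t
      = n + ∑ s ∈ range t, 4 * (h + (h + 2 * r) * (5 ^ (s + 1) - 1)) := by
    rw [← sum_range_mul_five_pow_sub_one h (2 * r) t, show 4 * (2 * r) * t = 8 * r * t by ring,
      ← add_assoc, Nat.add_sub_cancel]
  rw [hsize]
  exact ((hbase.add_sum_range hh hleaf (by omega)).double (q := ⟨2 * (t + 1), by omega⟩)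
    hh rfl).existsGallaiColoringAvoiding

theorem kipas_gallai_lower_odd_k_odd_m_general (k m n c d : ℕ) (hk : 3 ≤ k) (hko : k % 2 = 1)
    (hm : 3 ≤ m) (hmo : m % 2 = 1)
    (hcd : (m % 4 = 1 ∧ c = m - 3 ∧ d = m - 5) ∨ (m % 4 = 3 ∧ c = m - 2 ∧ d = m - 3))
    (h2 : ∃ χ : Fin n → Fin n → Fin 2, (∀ x y, χ x y = χ y x) ∧
      ¬ IsMonoCopy (⊤ : SimpleGraph (Fin n)) χ (kipasG m)) :
    ExistsGallaiColoringAvoiding k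
        (2 * n + 10 * c * (5 ^ ((k - 3) / 2) - 1) - 2 * d * (k - 3)) (kipasG m) ∧
      2 * (Ramsey2 (kipasG m) + 5 * c * (5 ^ ((k - 3) / 2) - 1) - d * (k - 3)) - 1 ≤
        GallaiRamsey k (kipasG m) := by
  obtain ⟨t, rfl⟩ : ∃ t, k = 2 * t + 3 := ⟨(k - 3) / 2, by omega⟩
  obtain ⟨h, r, rfl, rfl, rfl, hr⟩ : ∃ h r, m = 2 * h + 1 ∧ c = h + 2 * r ∧ d = 4 * r ∧ 2 * r < h :=
    ⟨m / 2, (m / 2 - 1) / 2, by omega⟩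
  have hextend (N : ℕ) (hN : ExistsGallaiColoringAvoiding 2 N (kipasG (2 * h + 1))) :=
    hN.kipasG_two_mul_add_three hr t
  have hc : 10 * (h + 2 * r) * (5 ^ t - 1) = 2 * (5 * (h + 2 * r) * (5 ^ t - 1)) := by ring
  have hd : 4 * r * (2 * t) = 8 * r * t := by ring
  have hd₂ : 2 * (4 * r) * (2 * t) = 2 * (8 * r * t) := by ring
  rw [Nat.add_sub_cancel, Nat.mul_div_cancel_left t two_pos, hc, hd, hd₂, ← mul_add, ← Nat.mul_sub]
  refine ⟨hextend n (existsGallaiColoringAvoiding_two h2), ?_⟩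
  have hlt := lt_gallaiRamsey (hextend _ (existsGallaiColoringAvoiding_ramsey2_sub_one _))
  omega

end LowerBound

/-- Odd `k ≥ 5`, odd `m ≥ 7`: from a 2-coloring of `K_n` with no monochromatic
kipas `K̂_m`, one gets a Gallai `k`-coloring of a larger complete graph with no
monochromatic `K̂_m`; consequently the Gallai–Ramsey lower bound. -/
theorem kipas_gallai_lower_odd_k_odd_m (k m n c d : ℕ) (hk : 5 ≤ k) (hko : k % 2 = 1)
    (hm : 7 ≤ m) (hmo : m % 2 = 1)
    (hcd : (m % 4 = 1 ∧ c = m - 3 ∧ d = m - 5) ∨ (m % 4 = 3 ∧ c = m - 2 ∧ d = m - 3))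
    (h2 : ∃ χ : Fin n → Fin n → Fin 2, (∀ x y, χ x y = χ y x) ∧
      ¬ IsMonoCopy (⊤ : SimpleGraph (Fin n)) χ (kipasG m)) :
    (∃ χ : Fin (2 * n + 10 * c * (5 ^ ((k - 3) / 2) - 1) - 2 * d * (k - 3)) →
        Fin (2 * n + 10 * c * (5 ^ ((k - 3) / 2) - 1) - 2 * d * (k - 3)) → Fin k,
      (∀ x y, χ x y = χ y x) ∧
      NoRainbowTriangle (⊤ : SimpleGraph (Fin (2 * n + 10 * c * (5 ^ ((k - 3) / 2) - 1) - 2 * d * (k - 3)))) χ ∧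
      ¬ IsMonoCopy (⊤ : SimpleGraph (Fin (2 * n + 10 * c * (5 ^ ((k - 3) / 2) - 1) - 2 * d * (k - 3)))) χ (kipasG m)) ∧
    2 * (Ramsey2 (kipasG m) + 5 * c * (5 ^ ((k - 3) / 2) - 1) - d * (k - 3)) - 1 ≤
      GallaiRamsey k (kipasG m) :=
  kipas_gallai_lower_odd_k_odd_m_general k m n c d (by omega) hko (by omega) hmo hcd h2
end

section
/- For every even integer n ≥ 4, there exists an edge 2-coloring of the graph obtained from the complete graph on 2n−1 vertices by deleting one edge, containing no monochromatic copy of K^+_{1,n}. Together with the fact that every edge 2-coloring of the complete graph on 2n−1 vertices contains a monochromatic K^+_{1,n}, this shows that K^+_{1,n} is Ramsey-full. -/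
open SimpleGraph

/-!
A red graph on `2n - 1` vertices with all red and blue degrees below `n` would be
`(n - 1)`-regular, which is impossible since `n - 1` and `2n - 1` are odd. So some vertex `v` has
`n` neighbors `L` in one color. A further edge of that color from `L` to the rest gives a copy of
`K⁺_{1,n}`; otherwise all edges from `L` to the remaining `n - 2 ≥ 2` vertices have the other color,
and two of these vertices together with `L` span a copy.

Deleting an edge removes the parity obstruction: take two disjoint red copies of `K_{n-1}` and a red
perfect matching between them, and subdivide `n/2 - 1` of the matching edges by one common new
vertex. Every vertex has red degree `n - 1` except for the new one, which has red degree `n - 2` and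
blue degree `n`; deleting one blue edge there leaves all degrees below `n` in both colors.
-/

section Coloring

variable {α V : Type*} {H : SimpleGraph α}

theorem exists_not_isMonoCopy_iff {G : SimpleGraph V} :
    (∃ c : V → V → Fin 2, (∀ x y, c x y = c y x) ∧ ¬ IsMonoCopy G c H) ↔
      ∃ R : SimpleGraph V, H.Free (G ⊓ R) ∧ H.Free (G \ R) := by
  classical
  constructor
  · rintro ⟨c, hc, hmono⟩
    let R : SimpleGraph V := fromRel fun x y ↦ c x y = 0
    have hR {x y : V} (hxy : G.Adj x y) : R.Adj x y ↔ c x y = 0 := by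
      simp [R, hxy.ne, hc y x]
    refine ⟨R, fun ⟨f⟩ ↦ hmono ⟨f, 0, f.injective, fun a b hab ↦ ?_⟩,
      fun ⟨f⟩ ↦ hmono ⟨f, 1, f.injective, fun a b hab ↦ ?_⟩⟩
    · obtain ⟨hG, hred⟩ := f.toHom.map_adj hab
      exact ⟨hG, (hR hG).1 hred⟩
    · obtain ⟨hG, hblue⟩ := f.toHom.map_adj hab
      exact ⟨hG, Fin.eq_one_of_ne_zero _ (mt (hR hG).2 hblue)⟩
  · rintro ⟨R, hred, hblue⟩
    refine ⟨fun x y ↦ if R.Adj x y then 0 else 1, fun x y ↦ by simp only [R.adj_comm], ?_⟩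
    rintro ⟨f, i, hf, hmap⟩
    obtain rfl | rfl : i = 0 ∨ i = 1 := by lia
    · refine hred ⟨⟨⟨f, fun {a b} hab ↦ ?_⟩, hf⟩⟩
      simpa using hmap a b hab
    · refine hblue ⟨⟨⟨f, fun {a b} hab ↦ ?_⟩, hf⟩⟩
      simpa using hmap a b hab

theorem exists_equiv_fin_val_eq_zero_one [Fintype V] {N : ℕ} (hV : Fintype.card V = N) {u w : V}
    (huw : u ≠ w) : ∃ e : V ≃ Fin N, (e u).val = 0 ∧ (e w).val = 1 := by
  have hN : 1 < N := hV ▸ Fintype.one_lt_card_iff.2 ⟨u, w, huw⟩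
  let e := Fintype.equivFinOfCardEq hV
  obtain ⟨σ, hu, hw⟩ := (MulAction.is_two_pretransitive_iff (G := Equiv.Perm (Fin N))).1
    (Equiv.Perm.isMultiplyPretransitive _ 2) (e.injective.ne huw)
    (show (⟨0, by lia⟩ : Fin N) ≠ ⟨1, hN⟩ by simp)
  exact ⟨e.trans σ, congrArg Fin.val hu, congrArg Fin.val hw⟩

theorem exists_not_isMonoCopy_compMinusEdge [Fintype V] {N : ℕ} (hV : Fintype.card V = N) {u w : V}
    (huw : u ≠ w) {R : SimpleGraph V} (hred : H.Free R)
    (hblue : H.Free (Rᶜ.deleteEdges {s(u, w)})) :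
    ∃ c : Fin N → Fin N → Fin 2, (∀ x y, c x y = c y x) ∧ ¬ IsMonoCopy (compMinusEdge N) c H := by
  obtain ⟨e, hu, hw⟩ := exists_equiv_fin_val_eq_zero_one hV huw
  have hsymm {x : Fin N} {v : V} (h : e.symm x = v) : x = e v := by simp [← h]
  refine exists_not_isMonoCopy_iff.2 ⟨R.comap e.symm,
    fun h ↦ hred (h.trans ⟨⟨⟨e.symm, fun hxy ↦ hxy.2⟩, e.symm.injective⟩⟩),
    fun h ↦ hblue (h.trans ⟨⟨⟨e.symm, fun {x y} hxy ↦ ?_⟩, e.symm.injective⟩⟩)⟩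
  obtain ⟨⟨hne, h01, h10⟩, hR⟩ := hxy
  refine deleteEdges_adj.2 ⟨⟨e.symm.injective.ne hne, hR⟩, fun h ↦ ?_⟩
  obtain ⟨hx, hy⟩ | ⟨hx, hy⟩ := Sym2.eq_iff.1 h
  · exact h01 ⟨hsymm hx ▸ hu, hsymm hy ▸ hw⟩
  · exact h10 ⟨hsymm hx ▸ hw, hsymm hy ▸ hu⟩

theorem ramsey2_eq_of_exists_not_isMonoCopy_compMinusEdge {N : ℕ}
    (hupper : ∀ c : Fin N → Fin N → Fin 2, (∀ x y, c x y = c y x) → IsMonoCopy ⊤ c H)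
    (hlower : ∃ c : Fin N → Fin N → Fin 2, (∀ x y, c x y = c y x) ∧
      ¬ IsMonoCopy (compMinusEdge N) c H) :
    Ramsey2 H = N := by
  refine le_antisymm (Nat.sInf_le hupper) (le_csInf ⟨N, hupper⟩ fun M hM ↦ ?_)
  by_contra! hMN
  obtain ⟨c, hc, hmono⟩ := hlower
  -- Skipping the vertex `0` avoids the deleted edge.
  let g (x : Fin M) : Fin N := ⟨x + 1, by lia⟩
  have hg : Function.Injective g := fun x y h ↦ by simpa [g, Fin.ext_iff] using h
  obtain ⟨f, i, hf, hmap⟩ := hM (fun x y ↦ c (g x) (g y)) fun x y ↦ hc _ _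
  refine hmono ⟨g ∘ f, i, hg.comp hf, fun a b hab ↦ ⟨⟨?_, ?_, ?_⟩, (hmap a b hab).2⟩⟩
  · exact hg.ne (hmap a b hab).1
  · simp [g]
  · simp [g]

end Coloring

section Degree

variable {V : Type*}

theorem degree_deleteEdges_lt_of_adj {G : SimpleGraph V} {u w : V} [Fintype (G.neighborSet u)]
    [Fintype ((G.deleteEdges {s(u, w)}).neighborSet u)] (huw : G.Adj u w) :
    (G.deleteEdges {s(u, w)}).degree u < G.degree u := by
  refine Finset.card_lt_card ⟨fun x hx ↦ ?_, fun h ↦ ?_⟩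
  · simp_all
  · simpa using h ((G.mem_neighborFinset u w).2 huw)

theorem even_card_mul_of_isRegularOfDegree [Fintype V] {G : SimpleGraph V} [DecidableRel G.Adj]
    {d : ℕ} (hG : G.IsRegularOfDegree d) : Even (Fintype.card V * d) := by
  have hsum := G.sum_degrees_eq_twice_card_edges
  simp only [hG.degree_eq, Finset.sum_const, Finset.card_univ, smul_eq_mul] at hsum
  exact hsum ▸ even_two_mul _

theorem exists_le_degree_or_le_degree_compl [Fintype V] [DecidableEq V] (G : SimpleGraph V)
    [DecidableRel G.Adj] {n : ℕ} (heven : Even n) (hV : Fintype.card V + 1 = 2 * n) :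
    ∃ v, n ≤ G.degree v ∨ n ≤ Gᶜ.degree v := by
  by_contra! hdeg
  have hreg : G.IsRegularOfDegree (n - 1) := fun v ↦ by
    have := hdeg v
    rw [degree_compl] at this
    lia
  have hV_odd : ¬ Even (Fintype.card V) := by grind
  have hdeg_odd : ¬ Even (n - 1) := by grind
  exact (Nat.even_mul.1 (even_card_mul_of_isRegularOfDegree hreg)).elim hV_odd hdeg_odd

end Degree

section StarPlus

variable {V : Type*} {n : ℕ}

theorem le_maxDegree_starPlusG [DecidableRel (starPlusG n).Adj] :
    n ≤ (starPlusG n).maxDegree := by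
  have hsub : Finset.univ.map ((Fin.succEmb n).trans Fin.castSuccEmb) ⊆
      (starPlusG n).neighborFinset 0 := by
    intro k hk
    obtain ⟨j, -, rfl⟩ := Finset.mem_map.1 hk
    rw [mem_neighborFinset, starPlusG, fromRel_adj]
    exact ⟨Fin.ne_of_lt (Nat.succ_pos _), Or.inl (Or.inl ⟨rfl, Nat.succ_le_of_lt j.2⟩)⟩
  calc
    n = (Finset.univ.map ((Fin.succEmb n).trans Fin.castSuccEmb)).card := by simp
    _ ≤ (starPlusG n).degree 0 := Finset.card_le_card hsub
    _ ≤ (starPlusG n).maxDegree := degree_le_maxDegree _ _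

theorem starPlusG_free_of_maxDegree_lt [Fintype V] {G : SimpleGraph V} [DecidableRel G.Adj]
    (hG : G.maxDegree < n) : (starPlusG n).Free G := by
  classical
  exact fun h ↦ (le_maxDegree_starPlusG.trans h.maxDegree_mono).not_gt hG

theorem starPlusG_succ_isContained {G : SimpleGraph V} {v w : V} {leaf : Fin (n + 1) → V}
    (hleaf : Function.Injective leaf) (hv : ∀ k, G.Adj v (leaf k))
    (hw : G.Adj (leaf (Fin.last n)) w) (hvw : v ≠ w) (hwleaf : w ∉ Set.range leaf) :
    starPlusG (n + 1) ⊑ G := by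
  let f : Fin (n + 1 + 2) → V := Fin.cons v (Fin.snoc leaf w : Fin (n + 1 + 1) → V)
  have hf : Function.Injective f := by
    refine Fin.cons_injective_iff.2 ⟨?_, Fin.snoc_injective_iff.2 ⟨hleaf, hwleaf⟩⟩
    rintro ⟨k, hk⟩
    induction k using Fin.lastCases with
    | last => exact hvw (by simpa using hk.symm)
    | cast k => exact (hv k).ne (by simpa using hk.symm)
  have hadj {a b : Fin (n + 1 + 2)} (hab : a ≠ b)
      (h : (a = 0 ∧ b.val ≤ n + 1) ∨ (a.val = n + 1 ∧ b.val = n + 1 + 1)) : G.Adj (f a) (f b) := by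
    obtain ⟨rfl, hb⟩ | ⟨ha, hb⟩ := h
    · obtain ⟨k, rfl⟩ : ∃ k : Fin (n + 1), b = k.castSucc.succ :=
        ⟨⟨b - 1, by grind⟩, by grind⟩
      simpa [f] using hv k
    · obtain rfl : a = (Fin.last n).castSucc.succ := Fin.ext ha
      obtain rfl : b = (Fin.last (n + 1)).succ := Fin.ext hb
      simpa [f] using hw
  refine ⟨⟨⟨f, fun {a b} hab ↦ ?_⟩, hf⟩⟩
  obtain ⟨hne, h | h⟩ := (fromRel_adj _ _ _).1 hab
  · exact hadj hne h
  · exact (hadj hne.symm h).symm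

theorem starPlusG_isContained_of_finset {G : SimpleGraph V} {v a w : V} {L : Finset V}
    (hL : L.card = n) (hv : ∀ l ∈ L, G.Adj v l) (ha : a ∈ L) (haw : G.Adj a w)
    (hvw : v ≠ w) (hw : w ∉ L) : starPlusG n ⊑ G := by
  obtain ⟨m, rfl⟩ : ∃ m, n = m + 1 := Nat.exists_eq_add_one.2 (hL ▸ Finset.card_pos.2 ⟨a, ha⟩)
  classical
  let e : Fin (m + 1) ≃ L := (L.equivFinOfCardEq hL).symm
  let e' : Fin (m + 1) ≃ L := (Equiv.swap (Fin.last m) (e.symm ⟨a, ha⟩)).trans e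
  have he' : e' (Fin.last m) = ⟨a, ha⟩ := by simp [e']
  exact starPlusG_succ_isContained (leaf := fun k ↦ e' k)
    (Subtype.val_injective.comp e'.injective) (fun k ↦ hv _ (e' k).2) (by simpa [he'] using haw)
    hvw (by rintro ⟨k, rfl⟩; exact hw (e' k).2)

theorem starPlusG_isContained_or_isContained_compl_of_le_degree [Fintype V] {G : SimpleGraph V}
    [DecidableRel G.Adj] (hn : 0 < n) (hV : n + 3 ≤ Fintype.card V) {v : V}
    (hv : n ≤ G.degree v) : starPlusG n ⊑ G ∨ starPlusG n ⊑ Gᶜ := by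
  classical
  refine or_iff_not_imp_left.2 fun hG ↦ ?_
  obtain ⟨L, hLv, hL⟩ := Finset.exists_subset_card_eq hv
  have hvL : v ∉ L := fun h ↦ G.loopless.irrefl v ((G.mem_neighborFinset v v).1 (hLv h))
  have hcross {l w : V} (hl : l ∈ L) (hw : w ∉ insert v L) : Gᶜ.Adj l w := by
    rw [Finset.mem_insert, not_or] at hw
    refine ⟨ne_of_mem_of_not_mem hl hw.2, fun hlw ↦ hG ?_⟩
    exact starPlusG_isContained_of_finset hL (fun l hl ↦ (G.mem_neighborFinset v l).1 (hLv hl))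
      hl hlw (Ne.symm hw.1) hw.2
  obtain ⟨a, ha⟩ : L.Nonempty := Finset.card_pos.1 (hL ▸ hn)
  obtain ⟨b, hb, b', hb', hbb'⟩ : ∃ b ∈ (insert v L)ᶜ, ∃ b' ∈ (insert v L)ᶜ, b ≠ b' := by
    rw [← Finset.one_lt_card, Finset.card_compl, Finset.card_insert_of_notMem hvL]
    lia
  rw [Finset.mem_compl] at hb hb'
  exact starPlusG_isContained_of_finset hL (fun l hl ↦ (hcross hl hb).symm) ha (hcross ha hb') hbb'
    (fun h ↦ hb' (Finset.mem_insert_of_mem h))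

theorem starPlusG_isContained_or_isContained_compl [Fintype V] (G : SimpleGraph V) (hn : 4 ≤ n)
    (heven : Even n) (hV : Fintype.card V + 1 = 2 * n) :
    starPlusG n ⊑ G ∨ starPlusG n ⊑ Gᶜ := by
  classical
  obtain ⟨v, hv | hv⟩ := exists_le_degree_or_le_degree_compl G heven hV
  · exact starPlusG_isContained_or_isContained_compl_of_le_degree (by lia) (by lia) hv
  · simpa [or_comm] using
      starPlusG_isContained_or_isContained_compl_of_le_degree (G := Gᶜ) (by lia) (by lia) hv

theorem isMonoCopy_top_starPlusG (hn : 4 ≤ n) (heven : Even n)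
    (c : Fin (2 * n - 1) → Fin (2 * n - 1) → Fin 2) (hc : ∀ x y, c x y = c y x) :
    IsMonoCopy ⊤ c (starPlusG n) := by
  by_contra hmono
  obtain ⟨R, hred, hblue⟩ := exists_not_isMonoCopy_iff.1 ⟨c, hc, hmono⟩
  rw [top_inf_eq] at hred
  rw [top_sdiff] at hblue
  exact (starPlusG_isContained_or_isContained_compl R hn heven (by simp; lia)).elim hred hblue

end StarPlus

section LinkedCliques

variable {α : Type*}

/-- Two disjoint cliques on `α`, with corresponding vertices joined by an edge, in which the
matching edges over `S` are subdivided by one common vertex `none`. It serves as the red graph of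
the coloring without monochromatic `K⁺_{1,n}`. -/
def linkedCliques (S : Finset α) : SimpleGraph (Option (Bool × α)) where
  Adj
    | none, none => False
    | none, some q => q.2 ∈ S
    | some p, none => p.2 ∈ S
    | some p, some q => (p.1 = q.1 ∧ p.2 ≠ q.2) ∨ (p.1 ≠ q.1 ∧ p.2 = q.2 ∧ p.2 ∉ S)
  symm := ⟨by
    rintro (_ | p) (_ | q) h
    · exact h
    · exact h
    · exact h
    · grind⟩
  loopless := ⟨by rintro (_ | p) h <;> simp_all⟩

variable [Fintype α] {S : Finset α}

theorem degree_linkedCliques_none [DecidableRel (linkedCliques S).Adj] :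
    (linkedCliques S).degree none = 2 * S.card := by
  have hnbr : (linkedCliques S).neighborFinset none =
      ((Finset.univ : Finset Bool) ×ˢ S).map .some := by
    ext (_ | p) <;> simp only [mem_neighborFinset] <;> simp [linkedCliques]
  rw [← card_neighborFinset_eq_degree, hnbr]
  simp

theorem degree_linkedCliques_some [DecidableRel (linkedCliques S).Adj] (p : Bool × α) :
    (linkedCliques S).degree (some p) = Fintype.card α := by
  classical
  let partner : Option (Bool × α) := if p.2 ∈ S then none else some (!p.1, p.2)
  let clique : Finset (Option (Bool × α)) := (Finset.univ.erase p.2).image fun j ↦ some (p.1, j)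
  have hpartner : partner ∉ clique := by
    simp only [partner, clique]
    split_ifs <;> simp
  have hclique : clique.card = Fintype.card α - 1 := by
    rw [Finset.card_image_of_injective _ fun i j h ↦ by simpa using h,
      Finset.card_erase_of_mem (Finset.mem_univ _), Finset.card_univ]
  have hnbr : (linkedCliques S).neighborFinset (some p) = insert partner clique := by
    ext (_ | q) <;> rw [mem_neighborFinset]
    · simp [linkedCliques, partner, clique]
    · have hmem_clique : some q ∈ clique ↔ p.1 = q.1 ∧ p.2 ≠ q.2 := by
        simp [clique, Prod.ext_iff, and_comm, eq_comm]
      have heq_partner : some q = partner ↔ p.1 ≠ q.1 ∧ p.2 = q.2 ∧ p.2 ∉ S := by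
        by_cases hp : p.2 ∈ S <;> simp [partner, hp, Prod.ext_iff, Bool.eq_not, eq_comm]
      rw [Finset.mem_insert, heq_partner, hmem_clique, or_comm]
      exact Iff.rfl
  rw [← card_neighborFinset_eq_degree, hnbr, Finset.card_insert_of_notMem hpartner, hclique]
  exact Nat.sub_add_cancel (Fintype.card_pos_iff.2 ⟨p.2⟩)

theorem maxDegree_linkedCliques_le [DecidableRel (linkedCliques S).Adj]
    (hS : 2 * S.card ≤ Fintype.card α) : (linkedCliques S).maxDegree ≤ Fintype.card α := by
  refine maxDegree_le_of_forall_degree_le _ _ ?_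
  rintro (_ | p)
  · exact degree_linkedCliques_none.trans_le hS
  · exact (degree_linkedCliques_some p).le

theorem maxDegree_compl_linkedCliques_deleteEdges_le {p : Bool × α} (hp : p.2 ∉ S)
    (hS : Fintype.card α ≤ 2 * S.card + 1)
    [DecidableRel ((linkedCliques S)ᶜ.deleteEdges {s(none, some p)}).Adj] :
    ((linkedCliques S)ᶜ.deleteEdges {s(none, some p)}).maxDegree ≤ Fintype.card α := by
  classical
  have hcard : Fintype.card (Option (Bool × α)) = 2 * Fintype.card α + 1 := by simp
  refine maxDegree_le_of_forall_degree_le _ _ ?_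
  rintro (_ | q)
  · have hadj : (linkedCliques S)ᶜ.Adj none (some p) := ⟨by simp, hp⟩
    have hlt := degree_deleteEdges_lt_of_adj hadj
    rw [degree_compl, degree_linkedCliques_none] at hlt
    lia
  · have hle := degree_le_of_le (v := some q)
      (deleteEdges_le (G := (linkedCliques S)ᶜ) {s(none, some p)})
    rw [degree_compl, degree_linkedCliques_some] at hle
    lia

end LinkedCliques

theorem exists_not_isMonoCopy_compMinusEdge_starPlusG {n : ℕ} (hn : 2 ≤ n) (heven : Even n) :
    ∃ c : Fin (2 * n - 1) → Fin (2 * n - 1) → Fin 2, (∀ x y, c x y = c y x) ∧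
      ¬ IsMonoCopy (compMinusEdge (2 * n - 1)) c (starPlusG n) := by
  classical
  obtain ⟨k, rfl⟩ : ∃ k, n = 2 * k + 2 := ⟨n / 2 - 1, by grind⟩
  have hα : Fintype.card (Fin (2 * k + 1)) = 2 * k + 1 := Fintype.card_fin _
  obtain ⟨S, -, hS⟩ : ∃ S ⊆ (Finset.univ : Finset (Fin (2 * k + 1))), S.card = k :=
    Finset.exists_subset_card_eq (by rw [Finset.card_univ]; lia)
  obtain ⟨i, -, hi⟩ : ∃ i ∈ (Finset.univ : Finset (Fin (2 * k + 1))), i ∉ S :=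
    Finset.exists_mem_notMem_of_card_lt_card (by rw [Finset.card_univ]; lia)
  have hV : Fintype.card (Option (Bool × Fin (2 * k + 1))) = 2 * (2 * k + 2) - 1 := by
    rw [Fintype.card_option, Fintype.card_prod, Fintype.card_bool, hα]
    lia
  have hred : (linkedCliques S).maxDegree < 2 * k + 2 :=
    (maxDegree_linkedCliques_le (by lia)).trans_lt (by lia)
  have hblue :
      ((linkedCliques S)ᶜ.deleteEdges {s(none, some (false, i))}).maxDegree < 2 * k + 2 :=
    (maxDegree_compl_linkedCliques_deleteEdges_le hi (by lia)).trans_lt (by lia)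
  exact exists_not_isMonoCopy_compMinusEdge hV (Option.some_ne_none _).symm
    (starPlusG_free_of_maxDegree_lt hred) (starPlusG_free_of_maxDegree_lt hblue)

/-- For every even `n ≥ 4`, the complete graph on `2n − 1` vertices minus one
edge admits a 2-coloring with no monochromatic copy of `K⁺_{1,n}`; together
with `K_{2n-1} → (K⁺_{1,n}, K⁺_{1,n})` this shows `K⁺_{1,n}` is Ramsey-full,
i.e. `K` on `R(K⁺_{1,n}, K⁺_{1,n})` vertices minus an edge admits such a
coloring. -/
theorem starPlus_ramsey_full (n : ℕ) (hn : 4 ≤ n) (hne : n % 2 = 0) :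
    (∃ c : Fin (2 * n - 1) → Fin (2 * n - 1) → Fin 2, (∀ x y, c x y = c y x) ∧
      ¬ IsMonoCopy (compMinusEdge (2 * n - 1)) c (starPlusG n)) ∧
    (∃ c : Fin (Ramsey2 (starPlusG n)) → Fin (Ramsey2 (starPlusG n)) → Fin 2,
      (∀ x y, c x y = c y x) ∧
      ¬ IsMonoCopy (compMinusEdge (Ramsey2 (starPlusG n))) c (starPlusG n)) := by
  have hne' : Even n := Nat.even_iff.2 hne
  have hlower := exists_not_isMonoCopy_compMinusEdge_starPlusG (by lia) hne'
  have hramsey := ramsey2_eq_of_exists_not_isMonoCopy_compMinusEdge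
    (isMonoCopy_top_starPlusG hn hne') hlower
  exact ⟨hlower, by rwa [hramsey]⟩
end

section
/- For every integer k ≥ 3 and every even integer n ≥ 12, there exists a Gallai k-coloring of the complete graph on 5n/2 + k − 7 vertices with no monochromatic copy of K^+_{1,n}. Consequently GR_k(K^+_{1,n}) ≥ 5n/2 + k − 6. -/
open SimpleGraph

/-!
Blow up the vertices of the pentagon coloring of `K₅` into five parts, one of size `⌊n/2⌋` and four
of size `⌊(n-1)/2⌋`, and use a third color inside the parts. In each pentagon color a vertex is
joined to exactly two parts, hence has degree less than `n`, so there is not even a monochromatic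
`K_{1,n}`. Each further color is spent on one new vertex joined to everything before it: the new
color class is a star, and `K⁺_{1,n}`, having two disjoint edges, is not contained in a star.

The lower bound on `GR_k` also needs the set in its definition to be nonempty, the infimum of the
empty set being `0`; this is Ramsey's theorem.
-/

open Finset

universe u

variable {α V W : Type*} {k : ℕ}

section Ramsey

/-- Multicolor Ramsey theorem, by the Erdős–Szekeres recursion: among the neighbors of a vertex in a
popular color `i`, a clique of color `i` and size `t i - 1` suffices. -/
theorem exists_forall_exists_monochromatic_finset {κ : Type*} [Finite κ] (t : κ → ℕ) :
    ∃ N, ∀ {V : Type u} (c : V → V → κ), (∀ x y, c x y = c y x) → ∀ S : Finset V, N ≤ #S →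
      ∃ i, ∃ T ⊆ S, #T = t i ∧ (T : Set V).Pairwise fun x y ↦ c x y = i := by
  classical
  cases nonempty_fintype κ
  have : DecidableEq κ := Classical.decEq κ
  induction t using WellFoundedLT.induction with | ind t ih
  by_cases ht : ∃ i, t i = 0
  · obtain ⟨i, hi⟩ := ht
    exact ⟨0, fun c _ S _ ↦ ⟨i, ∅, by simp [hi]⟩⟩
  push Not at ht
  have update_lt (i : κ) : Function.update t i (t i - 1) < t :=
    update_lt_self_iff.2 (Nat.sub_one_lt (ht i))
  choose N hN using fun i ↦ ih _ (update_lt i)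
  refine ⟨∑ i, N i + 2, fun c hc S hS ↦ ?_⟩
  obtain ⟨v, hv⟩ : S.Nonempty := card_pos.1 (by omega)
  have sum_lt : ∑ i, N i < ∑ i, #{w ∈ S.erase v | c v w = i} := by
    rw [← card_eq_sum_card_fiberwise (by simp), card_erase_of_mem hv]
    omega
  obtain ⟨i, -, hi⟩ := exists_lt_of_sum_lt sum_lt
  obtain ⟨j, T, hTS, hT, hmono⟩ := hN i c hc _ hi.le
  have hTv (w) (hw : w ∈ T) : (w ≠ v ∧ w ∈ S) ∧ c v w = i := by simpa using hTS hw
  have hTS' : T ⊆ S := fun w hw ↦ (hTv w hw).1.2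
  obtain rfl | hji := eq_or_ne j i
  · have hvT : v ∉ T := fun h ↦ (hTv v h).1.1 rfl
    refine ⟨j, insert v T, insert_subset hv hTS', ?_, ?_⟩
    · have := ht j
      rw [card_insert_of_notMem hvT, hT, Function.update_self]
      omega
    · rw [coe_insert]
      exact hmono.insert fun w hw _ ↦ ⟨(hTv w hw).2, (hc w v).trans (hTv w hw).2⟩
  · exact ⟨j, T, hTS', by simpa [hji] using hT, hmono⟩

theorem exists_forall_isMonoCopy [Finite α] (k : ℕ) (H : SimpleGraph α) :
    ∃ N, ∀ c : Fin N → Fin N → Fin k, (∀ x y, c x y = c y x) →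
      IsMonoCopy (⊤ : SimpleGraph (Fin N)) c H := by
  cases nonempty_fintype α
  obtain ⟨N, hN⟩ := exists_forall_exists_monochromatic_finset fun _ : Fin k ↦ Fintype.card α
  refine ⟨N, fun c hc ↦ ?_⟩
  obtain ⟨i, T, -, hT, hmono⟩ := hN c hc univ (by simp)
  let e : α ≃ T := Fintype.equivOfCardEq (by simp [hT])
  have he : Function.Injective fun a ↦ (e a : Fin N) := Subtype.val_injective.comp e.injective
  exact ⟨_, i, he, fun a b hab ↦
    ⟨he.ne hab.ne, hmono (e a).2 (e b).2 (he.ne hab.ne)⟩⟩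

end Ramsey

section Witness

theorem NoRainbowTriangle.comap {G : SimpleGraph V} {G' : SimpleGraph W} {c : W → W → Fin k}
    (h : NoRainbowTriangle G' c) (φ : G →g G') :
    NoRainbowTriangle G fun x y ↦ c (φ x) (φ y) :=
  fun ⟨x, y, z, hxy, hyz, hxz, hc⟩ ↦
    h ⟨φ x, φ y, φ z, φ.map_adj hxy, φ.map_adj hyz, φ.map_adj hxz, hc⟩

theorem IsMonoCopy.map {G : SimpleGraph V} {G' : SimpleGraph W} {c : W → W → Fin k}
    {H : SimpleGraph α} (φ : Copy G G') (h : IsMonoCopy G (fun x y ↦ c (φ x) (φ y)) H) :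
    IsMonoCopy G' c H := by
  obtain ⟨f, i, hf, hadj⟩ := h
  exact ⟨φ ∘ f, i, φ.injective.comp hf, fun a b hab ↦
    ⟨φ.toHom.map_adj (hadj a b hab).1, (hadj a b hab).2⟩⟩

/-- A Gallai coloring of the complete graph on `V` without a monochromatic copy of `H`: it witnesses
that `GR_k(H)` exceeds the number of vertices. -/
structure IsGallaiRamseyWitness (c : V → V → Fin k) (H : SimpleGraph α) : Prop where
  symm : ∀ x y, c x y = c y x
  noRainbowTriangle : NoRainbowTriangle (⊤ : SimpleGraph V) c
  not_isMonoCopy : ¬ IsMonoCopy (⊤ : SimpleGraph V) c H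

variable {c : V → V → Fin k} {H : SimpleGraph α}

theorem IsGallaiRamseyWitness.comap (h : IsGallaiRamseyWitness c H) (φ : W ↪ V) :
    IsGallaiRamseyWitness (fun x y ↦ c (φ x) (φ y)) H where
  symm _ _ := h.symm _ _
  noRainbowTriangle := h.noRainbowTriangle.comap (Embedding.completeGraph φ).toHom
  not_isMonoCopy hmono := h.not_isMonoCopy (hmono.map (Embedding.completeGraph φ).toCopy)

theorem IsGallaiRamseyWitness.card_lt_gallaiRamsey [Fintype V] [Finite α]
    (h : IsGallaiRamseyWitness c H) : Fintype.card V < GallaiRamsey k H := by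
  obtain ⟨M, hM⟩ := exists_forall_isMonoCopy k H
  rw [GallaiRamsey, ← Nat.succ_le_iff]
  refine le_csInf ⟨M, fun c hc _ ↦ hM c hc⟩ fun L hL ↦ ?_
  by_contra! card_lt
  obtain ⟨φ⟩ : Nonempty (Fin L ↪ V) :=
    Function.Embedding.nonempty_of_card_le (by simpa using Nat.le_of_lt_succ card_lt)
  have hφ := h.comap φ
  exact hφ.not_isMonoCopy (hL _ hφ.symm hφ.noRainbowTriangle)

end Witness

section Cone

/-- The coloring obtained from `c` by adding the vertex `none` and giving all edges at it the new
color `Fin.last k`. -/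
def coneColoring (c : V → V → Fin k) : Option V → Option V → Fin (k + 1)
  | some x, some y => (c x y).castSucc
  | _, _ => Fin.last k

variable {c : V → V → Fin k} {H : SimpleGraph α}

theorem coneColoring_symm (hc : ∀ x y, c x y = c y x) (x y : Option V) :
    coneColoring c x y = coneColoring c y x := by
  cases x <;> cases y <;> simp [coneColoring, hc]

theorem coneColoring_eq_last_iff {x y : Option V} :
    coneColoring c x y = Fin.last k ↔ x = none ∨ y = none := by
  cases x <;> cases y <;> simp [coneColoring, Fin.castSucc_ne_last]

theorem NoRainbowTriangle.coneColoring (h : NoRainbowTriangle (⊤ : SimpleGraph V) c) :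
    NoRainbowTriangle (⊤ : SimpleGraph (Option V)) (coneColoring c) := by
  rintro ⟨_ | x, _ | y, _ | z, hxy, hyz, hxz, hne⟩ <;>
    simp only [_root_.coneColoring, ne_eq, not_true_eq_false, and_false, false_and,
      Fin.castSucc_inj] at hne
  exact h ⟨x, y, z, by simpa using hxy, by simpa using hyz, by simpa using hxz, hne⟩

theorem IsMonoCopy.of_coneColoring (hadj : ∀ a, ∃ b, H.Adj a b) (hcover : 1 < H.vertexCoverNum)
    (h : IsMonoCopy (⊤ : SimpleGraph (Option V)) (coneColoring c) H) :
    IsMonoCopy (⊤ : SimpleGraph V) c H := by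
  obtain ⟨f, i, hf, hfi⟩ := h
  induction i using Fin.lastCases with
  | last =>
    have isVertexCover : H.IsVertexCover {a | f a = none} := fun a b hab ↦
      coneColoring_eq_last_iff.1 (hfi a b hab).2
    have encard_le_one : {a | f a = none}.encard ≤ 1 :=
      Set.encard_le_one_iff.2 fun a b ha hb ↦ hf (ha.trans hb.symm)
    exact absurd (isVertexCover.vertexCoverNum_le.trans encard_le_one) hcover.not_ge
  | cast i =>
    have f_ne_none (a : α) : f a ≠ none := fun ha ↦ by
      obtain ⟨b, hab⟩ := hadj a
      exact Fin.castSucc_ne_last i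
        ((hfi a b hab).2.symm.trans (coneColoring_eq_last_iff.2 (.inl ha)))
    choose g hg using fun a ↦ Option.ne_none_iff_exists'.1 (f_ne_none a)
    refine ⟨g, i, fun a b hab ↦ hf (by rw [hg, hg, hab]), fun a b hab ↦ ?_⟩
    simpa [hg, coneColoring] using hfi a b hab

theorem IsGallaiRamseyWitness.coneColoring (h : IsGallaiRamseyWitness c H)
    (hadj : ∀ a, ∃ b, H.Adj a b) (hcover : 1 < H.vertexCoverNum) :
    IsGallaiRamseyWitness (coneColoring c) H where
  symm := coneColoring_symm h.symm
  noRainbowTriangle := h.noRainbowTriangle.coneColoring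
  not_isMonoCopy hmono := h.not_isMonoCopy (hmono.of_coneColoring hadj hcover)

theorem IsGallaiRamseyWitness.exists_fin_add [Fintype V] (h : IsGallaiRamseyWitness c H)
    (hadj : ∀ a, ∃ b, H.Adj a b) (hcover : 1 < H.vertexCoverNum) (j : ℕ) :
    ∃ c' : Fin (Fintype.card V + j) → Fin (Fintype.card V + j) → Fin (k + j),
      IsGallaiRamseyWitness c' H := by
  induction j with
  | zero => exact ⟨_, h.comap (Fintype.equivFin V).symm.toEmbedding⟩
  | succ j ih =>
    obtain ⟨c', hc'⟩ := ih
    exact ⟨_, (hc'.coneColoring hadj hcover).comap (finSuccEquiv _).toEmbedding⟩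

end Cone

section ColorNeighbors

variable [Fintype V] [DecidableEq V]

/-- The neighbors of `v` along edges of color `i`, the diagonal value `c v v` being ignored. -/
def colorNeighborFinset (c : V → V → Fin k) (v : V) (i : Fin k) : Finset V :=
  {w | w ≠ v ∧ c v w = i}

@[simp]
theorem mem_colorNeighborFinset {c : V → V → Fin k} {v w : V} {i : Fin k} :
    w ∈ colorNeighborFinset c v i ↔ w ≠ v ∧ c v w = i := by
  simp [colorNeighborFinset]

theorem IsMonoCopy.exists_degree_le {G : SimpleGraph V} {c : V → V → Fin k} {H : SimpleGraph α}
    (h : IsMonoCopy G c H) (a : α) [Fintype (H.neighborSet a)] :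
    ∃ v i, H.degree a ≤ #(colorNeighborFinset c v i) := by
  obtain ⟨f, i, hf, hfi⟩ := h
  refine ⟨f a, i, card_le_card_of_injOn f (fun b hb ↦ ?_) hf.injOn⟩
  have hab : H.Adj a b := by simpa using hb
  simpa [hf.ne hab.ne'] using (hfi a b hab).2

end ColorNeighbors

section BlowUp

variable {Q : Type*} [DecidableEq Q] {β : Q → Type*} {c : Q → Q → Fin k}

/-- The blow-up of the coloring `c` of the complete graph on `Q`: each vertex `q` is replaced by a
set `β q`, whose internal edges get the new color `Fin.last k`. -/
def blowUpColoring (c : Q → Q → Fin k) (x y : Σ q, β q) : Fin (k + 1) :=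
  if x.1 = y.1 then Fin.last k else (c x.1 y.1).castSucc

theorem blowUpColoring_symm (hc : ∀ p q, c p q = c q p) (x y : Σ q, β q) :
    blowUpColoring c x y = blowUpColoring c y x := by
  simp [blowUpColoring, hc, eq_comm]

theorem NoRainbowTriangle.blowUpColoring (hc : ∀ p q, c p q = c q p)
    (h : NoRainbowTriangle (⊤ : SimpleGraph Q) c) :
    NoRainbowTriangle (⊤ : SimpleGraph (Σ q, β q)) (blowUpColoring c) := by
  rintro ⟨x, y, z, -, -, -, hne⟩
  simp only [_root_.blowUpColoring] at hne
  by_cases hxy : x.1 = y.1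
  · simp [hxy] at hne
  by_cases hyz : y.1 = z.1
  · simp [hyz] at hne
  by_cases hxz : x.1 = z.1
  · simp [hxz, hc y.1 z.1, eq_comm] at hne
  simp only [hxy, hyz, hxz, if_false, ne_eq, Fin.castSucc_inj] at hne
  exact h ⟨x.1, y.1, z.1, hxy, hyz, hxz, hne⟩

variable [Fintype Q] [∀ q, Fintype (β q)] [∀ q, DecidableEq (β q)]

theorem colorNeighborFinset_blowUpColoring_castSucc (v : Σ q, β q) (i : Fin k) :
    colorNeighborFinset (blowUpColoring c) v i.castSucc =
      (colorNeighborFinset c v.1 i).sigma fun _ ↦ univ := by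
  ext w
  by_cases hwv : w.1 = v.1
  · simp [blowUpColoring, hwv, (Fin.castSucc_ne_last i).symm]
  · have : w ≠ v := fun h ↦ hwv (congrArg Sigma.fst h)
    simp [blowUpColoring, hwv, Ne.symm hwv, this]

theorem colorNeighborFinset_blowUpColoring_last (v : Σ q, β q) :
    colorNeighborFinset (blowUpColoring c) v (Fin.last k) =
      (({v.1} : Finset Q).sigma fun _ ↦ univ).erase v := by
  ext w
  simp [blowUpColoring, Fin.castSucc_ne_last, eq_comm]

end BlowUp

section Pentagon

theorem noRainbowTriangle_of_fin_two (G : SimpleGraph V) (c : V → V → Fin 2) :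
    NoRainbowTriangle G c := by
  rintro ⟨x, y, z, -, -, -, hne⟩
  omega

/-- The coloring of `K₅` whose color classes are two 5-cycles. -/
def pentagonColoring (p q : Fin 5) : Fin 2 :=
  if (cycleGraph 5).Adj p q then 0 else 1

theorem pentagonColoring_symm (p q : Fin 5) : pentagonColoring p q = pentagonColoring q p := by
  simp only [pentagonColoring, adj_comm]

theorem card_colorNeighborFinset_pentagonColoring (p : Fin 5) (i : Fin 2) :
    #(colorNeighborFinset pentagonColoring p i) = 2 := by
  decide +revert

/-- The sizes of the parts of the extremal blow-up of the pentagon: they are as equal as possible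
subject to any two of them having total size less than `n`. -/
def pentagonPartSize (n : ℕ) (q : Fin 5) : ℕ :=
  if q = 0 then n / 2 else (n - 1) / 2

theorem sum_pentagonPartSize (n : ℕ) :
    ∑ q, pentagonPartSize n q = 4 * ((n - 1) / 2) + n / 2 := by
  simp [pentagonPartSize, Fin.sum_univ_succ]
  omega

theorem pentagonPartSize_add_lt {n : ℕ} (hn : 0 < n) {q r : Fin 5} (hqr : q ≠ r) :
    pentagonPartSize n q + pentagonPartSize n r < n := by
  unfold pentagonPartSize
  grind

theorem card_colorNeighborFinset_pentagonBlowUp_lt {n : ℕ} (hn : 0 < n)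
    (v : Σ q, Fin (pentagonPartSize n q)) (i : Fin 3) :
    #(colorNeighborFinset (blowUpColoring pentagonColoring) v i) < n := by
  induction i using Fin.lastCases with
  | last =>
    have hsize : pentagonPartSize n v.1 ≤ n := by
      unfold pentagonPartSize
      grind
    rw [colorNeighborFinset_blowUpColoring_last, card_erase_of_mem (by simp), card_sigma,
      sum_singleton, card_univ, Fintype.card_fin]
    omega
  | cast i =>
    obtain ⟨q, r, hqr, hpair⟩ :=
      card_eq_two.1 (card_colorNeighborFinset_pentagonColoring v.1 i)
    rw [colorNeighborFinset_blowUpColoring_castSucc, card_sigma, hpair, sum_pair hqr]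
    simpa using pentagonPartSize_add_lt hn hqr

end Pentagon

section StarPlus

theorem starPlusG_adj_zero {n : ℕ} {b : Fin (n + 2)} (hb : b ≠ 0) (hbn : b.val ≤ n) :
    (starPlusG n).Adj 0 b := by
  simp [starPlusG, hb.symm, hbn]

theorem starPlusG_adj_last (n : ℕ) :
    (starPlusG n).Adj (Fin.last n).castSucc (Fin.last (n + 1)) := by
  simp [starPlusG, fromRel_adj, Fin.castSucc_ne_last]

theorem exists_starPlusG_adj (n : ℕ) (a : Fin (n + 2)) : ∃ b, (starPlusG n).Adj a b := by
  by_cases ha : a = 0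
  · subst ha
    obtain rfl | hn := n.eq_zero_or_pos
    · exact ⟨_, starPlusG_adj_last 0⟩
    · exact ⟨1, starPlusG_adj_zero (by simp) (by simp; omega)⟩
  induction a using Fin.lastCases with
  | last => exact ⟨_, (starPlusG_adj_last n).symm⟩
  | cast a => exact ⟨0, (starPlusG_adj_zero ha (by simp; omega)).symm⟩

theorem one_lt_vertexCoverNum_starPlusG {n : ℕ} (hn : 2 ≤ n) :
    1 < (starPlusG n).vertexCoverNum := by
  obtain ⟨s, hs, hcover⟩ := (starPlusG n).vertexCoverNum_exists
  rw [← hs, Set.one_lt_encard_iff]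
  have adj_one : (starPlusG n).Adj 0 1 := starPlusG_adj_zero (by simp) (by simp; omega)
  rcases hcover adj_one with h | h <;> rcases hcover (starPlusG_adj_last n) with h' | h' <;>
    exact ⟨_, _, h, h', by simp [Fin.ext_iff] <;> omega⟩

theorem le_degree_starPlusG_zero (n : ℕ) [Fintype ((starPlusG n).neighborSet 0)] :
    n ≤ (starPlusG n).degree 0 := by
  let leaf (j : Fin n) : Fin (n + 2) := j.succ.castSucc
  have hleaf : Function.Injective leaf :=
    (Fin.castSucc_injective _).comp (Fin.succ_injective _)
  calc
    n = #(univ.map ⟨leaf, hleaf⟩) := by simp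
    _ ≤ #((starPlusG n).neighborFinset 0) := card_le_card fun b hb ↦ by
      obtain ⟨j, rfl⟩ : ∃ j, leaf j = b := by simpa using hb
      rw [mem_neighborFinset]
      exact starPlusG_adj_zero (by simp [leaf, Fin.ext_iff]) (by simp [leaf])

theorem isGallaiRamseyWitness_pentagonBlowUp {n : ℕ} (hn : 0 < n) :
    IsGallaiRamseyWitness
      (blowUpColoring pentagonColoring (β := fun q ↦ Fin (pentagonPartSize n q)))
      (starPlusG n) where
  symm := blowUpColoring_symm pentagonColoring_symm
  noRainbowTriangle :=
    (noRainbowTriangle_of_fin_two _ _).blowUpColoring pentagonColoring_symm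
  not_isMonoCopy hmono := by
    classical
    obtain ⟨v, i, hvi⟩ := hmono.exists_degree_le 0
    exact ((le_degree_starPlusG_zero n).trans hvi).not_gt
      (card_colorNeighborFinset_pentagonBlowUp_lt hn v i)

end StarPlus

theorem starPlus_gallai_lower_general (k n : ℕ) (hk : 3 ≤ k) (hn : 2 ≤ n) :
    (∃ c : Fin (4 * ((n - 1) / 2) + n / 2 + k - 3) →
        Fin (4 * ((n - 1) / 2) + n / 2 + k - 3) → Fin k,
      (∀ x y, c x y = c y x) ∧
      NoRainbowTriangle (⊤ : SimpleGraph (Fin (4 * ((n - 1) / 2) + n / 2 + k - 3))) c ∧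
      ¬ IsMonoCopy (⊤ : SimpleGraph (Fin (4 * ((n - 1) / 2) + n / 2 + k - 3))) c
        (starPlusG n)) ∧
    4 * ((n - 1) / 2) + n / 2 + k - 2 ≤ GallaiRamsey k (starPlusG n) := by
  obtain ⟨j, rfl⟩ := Nat.exists_eq_add_of_le hk
  obtain ⟨c, hc⟩ := (isGallaiRamseyWitness_pentagonBlowUp (by omega)).exists_fin_add
    (exists_starPlusG_adj n) (one_lt_vertexCoverNum_starPlusG hn) j
  have vertices : 4 * ((n - 1) / 2) + n / 2 + (3 + j) - 3 =
      Fintype.card (Σ q, Fin (pentagonPartSize n q)) + j := by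
    simp only [Fintype.card_sigma, Fintype.card_fin, sum_pentagonPartSize]
    omega
  have card_lt : _ < GallaiRamsey (3 + j) (starPlusG n) := hc.card_lt_gallaiRamsey
  rw [Fintype.card_fin] at card_lt
  rw [vertices]
  exact ⟨⟨c, hc.symm, hc.noRainbowTriangle, hc.not_isMonoCopy⟩, by omega⟩

/-- For every `k ≥ 3` and even `n ≥ 12`, there is a Gallai `k`-coloring of the
complete graph on `5n/2 + k − 7` vertices with no monochromatic copy of
`K⁺_{1,n}`; consequently `GR_k(K⁺_{1,n}) ≥ 5n/2 + k − 6`. -/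
theorem starPlus_gallai_lower (k n : ℕ) (hk : 3 ≤ k) (hn : 12 ≤ n) (hne : n % 2 = 0) :
    (∃ c : Fin (5 * n / 2 + k - 7) → Fin (5 * n / 2 + k - 7) → Fin k,
      (∀ x y, c x y = c y x) ∧
      NoRainbowTriangle (⊤ : SimpleGraph (Fin (5 * n / 2 + k - 7))) c ∧
      ¬ IsMonoCopy (⊤ : SimpleGraph (Fin (5 * n / 2 + k - 7))) c (starPlusG n)) ∧
    5 * n / 2 + k - 6 ≤ GallaiRamsey k (starPlusG n) := by
  have vertices : 5 * n / 2 + k - 7 = 4 * ((n - 1) / 2) + n / 2 + k - 3 := by omega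
  have bound : 5 * n / 2 + k - 6 = 4 * ((n - 1) / 2) + n / 2 + k - 2 := by omega
  rw [vertices, bound]
  exact starPlus_gallai_lower_general k n hk (by omega)
end
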